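/- Let μ ∈ (0,∞) and λ > 0 be fixed and let F_T, F_A, F_B be probability distributions on [0,∞) (the distributions of nonnegative random variables T, A, B). Then the conditions 0 ≤ E[T] < 1, E[A] = 1/λ, E[A²] < ∞ and 0 ≤ E[B] < ∞ hold if and only if the functional equation F̂(s) = ∫₀^∞ (1 + λ·σ_B(σ(s)))^{−a} dF_A(a) for all s ≥ 0 has exactly one solution: a probability distribution F on [0,∞) with mean μ and finite second moment (here σ is built from the unknown F, F_T and μ, and σ_B from F_B). Moreover, the unique solution F satisfies Var[F] = ((λ²·Var[A] + λ + E[B] + E[T])/(1 − E[T]))·μ². -/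

import Mathlib

/-!
Write `φ = F̂`. The equation is a fixed-point equation `φ = Ψ ∘ σ[φ]`, where
`Ψ(x) = ∫ (1 + λ σ_B(x))^{-a} dF_A(a) = Â(log (1 + λ σ_B(x)))` is `outer`, and
`σ[φ]` is `mixS φ F_T μ`, the integral over `t` of `(1 - φ(ts))/t`.

*Conditions imply a unique solution.* `σ[φ]` and `σ_B` are Bernstein functions and gamma mixtures
of subordinators have Laplace transforms `(1 + λ ψ)^{-a}`, so the right-hand side is again the
Laplace transform of a distribution (`exists_step`). Consider the distributions with
`0 ≤ φ(s) - 1 + μ s ≤ M s²` for all `s ≥ 0`, that is, with mean `μ` and second moment at most `2M`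
(`InC`). Expanding the right-hand side to second order (`outer_expand`) shows that this class is
mapped to itself when `M (1 - E[T])` is large enough (`InC.step`). As `E[A] = 1/λ`, the map `Ψ` is
`1`-Lipschitz, and `φ ↦ σ[φ]` contracts the metric `sup |φ - φ'|/s²` by the factor `E[T] < 1`
(`outer_contract`). Iterating from the point mass at `μ` produces a pointwise limit, which is a
Laplace transform by the continuity theorem `IsLT.lim`; the contraction also gives uniqueness, with
`LS_injective`.

*A solution implies the conditions and the variance formula.* Divide the equation by `s` and `s²`
and let `s ↓ 0`. At first order, `μ = E[A] λ μ`. At second order, all four remainders in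
`outer_expand` are nonnegative, so their limits can be taken in `[0, ∞]`:
`E[X²] = λ² μ² E[A²] + λ μ² + μ² E[B] + E[X²] E[T]`.
The left-hand side is finite, hence so is every term on the right, and positivity of `λ μ²` forces
`E[T] < 1` (`Sol.analysis`, `Sol.mean_lt_one`). Solving for `E[X²]` is the variance formula.
-/

open MeasureTheory

/-- Laplace–Stieltjes transform of a (nonnegative) probability distribution. -/
noncomputable def LS (F : Measure ℝ) (s : ℝ) : ℝ := ∫ x, Real.exp (-(s * x)) ∂F

/-- `σ(s) = ∫₀^∞ (1 − F̂(ts))/t dF_T(t)`, with the integrand at `t = 0` equal to `μ s`. -/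
noncomputable def sigmaT (F FT : Measure ℝ) (μ : ℝ) (s : ℝ) : ℝ :=
  ∫ t, (if t = 0 then μ * s else (1 - LS F (t * s)) / t) ∂FT

/-- The Bernstein function `σ_B(s) = ∫₀^s F̂_B(t) dt`. -/
noncomputable def sigmaB (FB : Measure ℝ) (s : ℝ) : ℝ := ∫ t in (0:ℝ)..s, LS FB t

/-- The moment conditions: `E[T] < 1`, `E[A] = 1/λ`, `E[A²] < ∞`, `E[B] < ∞`. -/
def Cond (FT FA FB : Measure ℝ) (lam : ℝ) : Prop :=
  (∫⁻ t, ENNReal.ofReal t ∂FT) < 1 ∧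
  (∫⁻ a, ENNReal.ofReal a ∂FA) = ENNReal.ofReal (1 / lam) ∧
  (∫⁻ a, ENNReal.ofReal (a ^ 2) ∂FA) < ⊤ ∧ (∫⁻ b, ENNReal.ofReal b ∂FB) < ⊤

/-- `F` is a solution: a probability distribution on `[0,∞)` with mean `μ`, finite second
moment, satisfying the power-mixture functional equation
`F̂(s) = ∫₀^∞ (1 + λ σ_B(σ(s)))^{−a} dF_A(a)` for all `s ≥ 0`. -/
def Sol (FT FA FB : Measure ℝ) (μ lam : ℝ) (F : Measure ℝ) : Prop :=
  IsProbabilityMeasure F ∧ F (Set.Iio 0) = 0 ∧ (∫ x, x ∂F) = μ ∧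
  Integrable (fun x => x ^ 2) F ∧
  ∀ s : ℝ, 0 ≤ s →
    LS F s = ∫ a, (1 + lam * sigmaB FB (sigmaT F FT μ s)) ^ (-a) ∂FA

section

open Filter Topology Set

/-! ### Laplace transforms of distributions on the half-line -/

lemma ae_nn {F : Measure ℝ} (h : F (Iio 0) = 0) : ∀ᵐ x ∂F, 0 ≤ x := by
  rw [ae_iff]
  simp only [not_le]
  exact h

lemma exp_neg_le_one {s x : ℝ} (hs : 0 ≤ s) (hx : 0 ≤ x) : Real.exp (-(s * x)) ≤ 1 := by
  rw [Real.exp_le_one_iff]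
  have := mul_nonneg hs hx
  linarith

lemma integrable_exp_neg {F : Measure ℝ} [IsProbabilityMeasure F] (h : F (Iio 0) = 0) {s : ℝ}
    (hs : 0 ≤ s) : Integrable (fun x => Real.exp (-(s * x))) F := by
  refine Integrable.mono' (integrable_const (1 : ℝ))
    (by fun_prop : Continuous _).aestronglyMeasurable ?_
  filter_upwards [ae_nn h] with x hx
  rw [Real.norm_eq_abs, abs_of_pos (Real.exp_pos _)]
  exact exp_neg_le_one hs hx

lemma measurable_LS (F : Measure ℝ) [IsProbabilityMeasure F] : Measurable (LS F) := by
  have : StronglyMeasurable (fun p : ℝ × ℝ => Real.exp (-(p.1 * p.2))) :=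
    (by fun_prop : Continuous (fun p : ℝ × ℝ => Real.exp (-(p.1 * p.2)))).stronglyMeasurable
  exact (StronglyMeasurable.integral_prod_right' (ν := F) this).measurable

lemma LS_zero (F : Measure ℝ) [IsProbabilityMeasure F] : LS F 0 = 1 := by
  simp [LS]

lemma LS_nonneg (F : Measure ℝ) (s : ℝ) : 0 ≤ LS F s :=
  integral_nonneg fun _ => (Real.exp_pos _).le

lemma LS_le_one {F : Measure ℝ} [IsProbabilityMeasure F] (h : F (Iio 0) = 0) {s : ℝ}
    (hs : 0 ≤ s) : LS F s ≤ 1 := by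
  have := integral_mono_ae (integrable_exp_neg h hs) (integrable_const (1 : ℝ)) (by
    filter_upwards [ae_nn h] with x hx
    exact exp_neg_le_one hs hx)
  simpa [LS] using this

lemma continuousOn_LS {F : Measure ℝ} [IsProbabilityMeasure F] (h : F (Iio 0) = 0) :
    ContinuousOn (LS F) (Ici 0) := by
  unfold LS
  refine continuousOn_of_dominated (bound := fun _ => (1 : ℝ)) ?_ ?_ (integrable_const _) ?_
  · intro s _
    exact (by fun_prop : Continuous _).aestronglyMeasurable
  · intro s hs
    filter_upwards [ae_nn h] with x hx
    rw [Real.norm_eq_abs, abs_of_pos (Real.exp_pos _)]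
    exact exp_neg_le_one hs hx
  · exact ae_of_all _ fun x => (by fun_prop : Continuous _).continuousOn

/-- `φ` agrees on `[0,∞)` with the Laplace–Stieltjes transform of a probability distribution
on `[0,∞)`; nothing is required of `φ` on the negative half-line. -/
def IsLT (φ : ℝ → ℝ) : Prop :=
  ∃ F : Measure ℝ, IsProbabilityMeasure F ∧ F (Iio 0) = 0 ∧ ∀ s, 0 ≤ s → φ s = LS F s

namespace IsLT

variable {φ ψ : ℝ → ℝ}

lemma congr (h : IsLT φ) (e : ∀ s, 0 ≤ s → ψ s = φ s) : IsLT ψ := by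
  obtain ⟨F, h1, h2, h3⟩ := h
  exact ⟨F, h1, h2, fun s hs => (e s hs).trans (h3 s hs)⟩

lemma nonneg (h : IsLT φ) {s : ℝ} (hs : 0 ≤ s) : 0 ≤ φ s := by
  obtain ⟨F, h1, h2, h3⟩ := h
  rw [h3 s hs]; exact LS_nonneg F s

lemma le_one (h : IsLT φ) {s : ℝ} (hs : 0 ≤ s) : φ s ≤ 1 := by
  obtain ⟨F, h1, h2, h3⟩ := h
  rw [h3 s hs]; exact LS_le_one h2 hs

lemma at_zero (h : IsLT φ) : φ 0 = 1 := by
  obtain ⟨F, h1, h2, h3⟩ := h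
  rw [h3 0 le_rfl, LS_zero]

lemma continuousOn (h : IsLT φ) : ContinuousOn φ (Ici 0) := by
  obtain ⟨F, h1, h2, h3⟩ := h
  exact (continuousOn_LS h2).congr fun s hs => h3 s hs

lemma tendsto_one (h : IsLT φ) : Tendsto φ (𝓝[>] 0) (𝓝 1) := by
  have := (h.continuousOn 0 (mem_Ici.2 le_rfl)).tendsto
  rw [h.at_zero] at this
  exact this.mono_left (nhdsWithin_mono _ Ioi_subset_Ici_self)

lemma exp_neg_mul {c : ℝ} (hc : 0 ≤ c) : IsLT (fun s => Real.exp (-(c * s))) := by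
  refine ⟨Measure.dirac c, inferInstance, ?_, ?_⟩
  · rw [Measure.dirac_apply' _ measurableSet_Iio]
    simp [hc]
  · intro s _
    simp [LS, mul_comm]

lemma one : IsLT (fun _ => 1) := (exp_neg_mul le_rfl).congr (by simp)

lemma scale (h : IsLT φ) {c : ℝ} (hc : 0 ≤ c) : IsLT (fun s => φ (c * s)) := by
  obtain ⟨F, h1, h2, h3⟩ := h
  refine ⟨F.map (fun x => c * x), Measure.isProbabilityMeasure_map (by fun_prop), ?_, ?_⟩
  · rw [Measure.map_apply (by fun_prop) measurableSet_Iio]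
    refine measure_mono_null ?_ h2
    intro x hx
    simp only [mem_preimage, mem_Iio] at hx ⊢
    by_contra hx'
    exact absurd (mul_nonneg hc (not_lt.1 hx')) (not_le.2 hx)
  · intro s hs
    beta_reduce
    rw [h3 _ (mul_nonneg hc hs), LS, LS, integral_map (by fun_prop)
      (by fun_prop : Continuous _).aestronglyMeasurable]
    congr 1; ext x; congr 2; ring

lemma mul (h : IsLT φ) (h' : IsLT ψ) : IsLT (fun s => φ s * ψ s) := by
  obtain ⟨F, h1, h2, h3⟩ := h
  obtain ⟨G, g1, g2, g3⟩ := h'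
  refine ⟨(F.prod G).map (fun p => p.1 + p.2), Measure.isProbabilityMeasure_map (by fun_prop),
    ?_, ?_⟩
  · rw [Measure.map_apply (by fun_prop) measurableSet_Iio]
    have a1 : ∀ᵐ p ∂(F.prod G), 0 ≤ p.1 := Measure.quasiMeasurePreserving_fst.ae (ae_nn h2)
    have a2 : ∀ᵐ p ∂(F.prod G), 0 ≤ p.2 := Measure.quasiMeasurePreserving_snd.ae (ae_nn g2)
    have : ∀ᵐ p ∂(F.prod G), ¬ (p.1 + p.2 < 0) := by
      filter_upwards [a1, a2] with p b1 b2
      linarith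
    rw [ae_iff] at this
    simp only [not_not] at this
    exact this
  · intro s hs
    beta_reduce
    rw [h3 s hs, g3 s hs, LS, LS, LS, integral_map (by fun_prop)
      (by fun_prop : Continuous _).aestronglyMeasurable, ← integral_prod_mul]
    congr 1; ext p; rw [← Real.exp_add]; congr 1; ring

lemma pow (h : IsLT φ) (n : ℕ) : IsLT (fun s => φ s ^ n) := by
  induction n with
  | zero => simpa using one
  | succ k ih => simpa only [pow_succ] using ih.mul h

/-- Countable mixtures of Laplace transforms. -/
lemma mix_nat {φ : ℕ → ℝ → ℝ} (h : ∀ n, IsLT (φ n)) (ν : Measure ℕ) [IsProbabilityMeasure ν] :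
    IsLT (fun s => ∫ n, φ n s ∂ν) := by
  choose F h1 h2 h3 using h
  have hp : IsProbabilityMeasure (Measure.sum fun n => ν {n} • F n) := by
    refine ⟨?_⟩
    rw [Measure.sum_apply _ MeasurableSet.univ]
    simp only [Measure.smul_apply, measure_univ, smul_eq_mul, mul_one]
    rw [← lintegral_one (μ := ν).trans measure_univ]
    simp [lintegral_countable']
  have h0 : (Measure.sum fun n => ν {n} • F n) (Iio 0) = 0 := by
    rw [Measure.sum_apply _ measurableSet_Iio]
    simp [h2]
  refine ⟨Measure.sum fun n => ν {n} • F n, hp, h0, ?_⟩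
  intro s hs
  beta_reduce
  rw [LS, integral_sum_measure (integrable_exp_neg h0 hs), integral_countable]
  · congr 1; ext n
    rw [integral_smul_measure, h3 n s hs]; rfl
  · refine Integrable.mono' (integrable_const (1 : ℝ))
      (measurable_of_countable _).aestronglyMeasurable (ae_of_all _ fun n => ?_)
    rw [h3 n s hs, Real.norm_eq_abs, abs_of_nonneg (LS_nonneg _ _)]
    exact LS_le_one (h2 n) hs

lemma binary (h : IsLT φ) {p : ℝ} (hp : 0 ≤ p) (hp1 : p ≤ 1) :
    IsLT (fun s => (1 - p) + p * φ s) := by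
  obtain ⟨F, h1, h2, h3⟩ := h
  have hF : IsProbabilityMeasure (ENNReal.ofReal (1 - p) • Measure.dirac (0 : ℝ)
      + ENNReal.ofReal p • F) := by
    refine ⟨?_⟩
    simp [← ENNReal.ofReal_add (sub_nonneg.2 hp1) hp]
  refine ⟨ENNReal.ofReal (1 - p) • Measure.dirac (0 : ℝ) + ENNReal.ofReal p • F, hF, ?_, ?_⟩
  · simp [h2, Measure.dirac_apply' _ (measurableSet_Iio (a := (0:ℝ)))]
  · intro s hs
    beta_reduce
    rw [LS, integral_add_measure, integral_smul_measure, integral_smul_measure, h3 s hs,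
      ENNReal.toReal_ofReal hp, ENNReal.toReal_ofReal (sub_nonneg.2 hp1)]
    · simp [LS]
    · exact (integrable_dirac (by simp)).smul_measure ENNReal.ofReal_ne_top
    · exact (integrable_exp_neg h2 hs).smul_measure ENNReal.ofReal_ne_top

/-- The change of variable `x ↦ e^{-x}` from `[0,∞)` to the compact interval `[0,1]`. -/
noncomputable def toI (x : ℝ) : unitInterval :=
  ⟨Real.exp (-(max x 0)), (Real.exp_pos _).le, by rw [Real.exp_le_one_iff]; simp⟩

lemma continuous_toI : Continuous toI := by
  unfold toI
  exact Continuous.subtype_mk (by fun_prop) _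

lemma log_toI {x : ℝ} (hx : 0 ≤ x) : -Real.log (toI x : ℝ) = x := by
  simp [toI, hx]

/-- Continuity theorem for Laplace transforms. The laws of `e^{-X_n}` live on the compact space
`[0,1]`, so they have a limit point `P`; continuity of the limit at `0` excludes an atom of `P`
at `0`, that is, mass of the `X_n` escaping to infinity. -/
lemma lim {φ : ℕ → ℝ → ℝ} {ψ : ℝ → ℝ} (h : ∀ n, IsLT (φ n))
    (hl : ∀ s, 0 ≤ s → Tendsto (fun n => φ n s) atTop (𝓝 (ψ s)))
    (h0 : Tendsto ψ (𝓝[>] 0) (𝓝 1)) : IsLT ψ := by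
  have hz : ψ 0 = 1 :=
    tendsto_nhds_unique (hl 0 le_rfl) (by simp [fun n => (h n).at_zero])
  choose F h1 h2 h3 using h
  let P : ℕ → ProbabilityMeasure unitInterval := fun n =>
    ⟨(F n).map toI, Measure.isProbabilityMeasure_map continuous_toI.measurable.aemeasurable⟩
  obtain ⟨Q, -, hQ⟩ := isCompact_univ.ultrafilter_le_nhds ((hyperfilter ℕ).map P) (by simp)
  have hQ' : Tendsto P (hyperfilter ℕ) (𝓝 Q) := hQ
  rw [ProbabilityMeasure.tendsto_iff_forall_integral_tendsto] at hQ'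
  have key : ∀ s, 0 < s → ψ s = ∫ v : unitInterval, (v : ℝ) ^ s ∂(Q : Measure unitInterval) := by
    intro s hs
    have hc : Continuous (fun v : unitInterval => (v : ℝ) ^ s) :=
      (Real.continuous_rpow_const hs.le).comp continuous_subtype_val
    have := hQ' (BoundedContinuousFunction.mkOfCompact ⟨_, hc⟩)
    refine tendsto_nhds_unique ((hl s hs.le).mono_left Nat.hyperfilter_le_atTop) ?_
    refine this.congr fun n => ?_
    rw [h3 n s hs.le, LS]
    simp only [P, BoundedContinuousFunction.mkOfCompact_apply, ContinuousMap.coe_mk,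
      ProbabilityMeasure.coe_mk]
    rw [integral_map continuous_toI.measurable.aemeasurable hc.aestronglyMeasurable]
    refine integral_congr_ae ?_
    filter_upwards [ae_nn (h2 n)] with x hx
    simp only [toI, max_eq_left hx]
    rw [← Real.exp_mul]; congr 1; ring
  have hle : ∀ (v : unitInterval) (s : ℝ), 0 ≤ s → (v : ℝ) ^ s ≤ 1 := fun v s hs =>
    Real.rpow_le_one v.2.1 v.2.2 hs
  have hpos : ∀ᵐ (v : unitInterval) ∂(Q : Measure unitInterval), (v : ℝ) ≠ 0 := by
    have l1 : Tendsto (fun s : ℝ => ∫ v : unitInterval, (v : ℝ) ^ s ∂(Q : Measure unitInterval))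
        (𝓝[>] 0) (𝓝 (∫ v : unitInterval, (if (v : ℝ) = 0 then 0 else 1)
          ∂(Q : Measure unitInterval))) := by
      refine tendsto_integral_filter_of_dominated_convergence (fun _ => (1 : ℝ)) ?_ ?_
        (integrable_const _) ?_
      · filter_upwards [self_mem_nhdsWithin] with s hs
        exact ((Real.continuous_rpow_const (le_of_lt hs)).comp
          continuous_subtype_val).aestronglyMeasurable
      · filter_upwards [self_mem_nhdsWithin] with s hs
        refine ae_of_all _ fun v => ?_
        rw [Real.norm_eq_abs, abs_of_nonneg (Real.rpow_nonneg v.2.1 _)]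
        exact hle v s (le_of_lt hs)
      · refine ae_of_all _ fun v => ?_
        split_ifs with hv
        · refine tendsto_const_nhds.congr' ?_
          filter_upwards [self_mem_nhdsWithin] with s hs
          rw [hv, Real.zero_rpow (ne_of_gt hs)]
        · have : ContinuousAt (fun s : ℝ => (v : ℝ) ^ s) 0 := Real.continuousAt_const_rpow hv
          have := this.tendsto
          rw [Real.rpow_zero] at this
          exact this.mono_left nhdsWithin_le_nhds
    have l2 : Tendsto (fun s : ℝ => ∫ v : unitInterval, (v : ℝ) ^ s ∂(Q : Measure unitInterval))
        (𝓝[>] 0) (𝓝 1) := by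
      refine h0.congr' ?_
      filter_upwards [self_mem_nhdsWithin] with s hs
      exact key s hs
    have e := tendsto_nhds_unique l1 l2
    have ms : MeasurableSet {v : unitInterval | (v : ℝ) ≠ 0} :=
      (measurableSet_eq_fun (by fun_prop) (by fun_prop)).compl
    have e2 : (∫ v : unitInterval, (if (v : ℝ) = 0 then (0 : ℝ) else 1)
          ∂(Q : Measure unitInterval)) = (Q : Measure unitInterval).real {v | (v : ℝ) ≠ 0} := by
      rw [← integral_indicator_one ms]
      congr 1; ext v
      by_cases hv : (v : ℝ) = 0 <;> simp only [hv, indicator, mem_ofPred_eq, if_true, if_false,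
        ne_eq, not_true, not_false_iff, Pi.one_apply]
    rw [e2] at e
    rw [ae_iff_measure_eq ms.nullMeasurableSet, measure_univ]
    rw [Measure.real, ENNReal.toReal_eq_one_iff] at e
    exact e
  have hm : Measurable (fun v : unitInterval => -Real.log (v : ℝ)) := by fun_prop
  refine ⟨(Q : Measure unitInterval).map (fun v : unitInterval => -Real.log (v : ℝ)),
    Measure.isProbabilityMeasure_map hm.aemeasurable, ?_, ?_⟩
  · rw [Measure.map_apply hm measurableSet_Iio]
    convert measure_empty (μ := (Q : Measure unitInterval))
    ext v
    have := Real.log_nonpos v.2.1 v.2.2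
    simpa using this
  · intro s hs
    rcases hs.eq_or_lt with rfl | hs
    · rw [hz]
      have := Measure.isProbabilityMeasure_map (μ := (Q : Measure unitInterval)) hm.aemeasurable
      rw [LS_zero]
    · rw [key s hs, LS, integral_map hm.aemeasurable
        (by fun_prop : Continuous _).aestronglyMeasurable]
      refine integral_congr_ae ?_
      filter_upwards [hpos] with v hv
      rw [Real.rpow_def_of_pos (lt_of_le_of_ne v.2.1 (Ne.symm hv))]
      congr 1; ring

end IsLT

/-- A distribution on `[0,∞)` is determined by its Laplace transform: the values at integers are
the moments of the law of `e^{-X}` on `[0,1]`, and polynomials are dense there. -/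
lemma LS_injective {F G : Measure ℝ} [IsProbabilityMeasure F] [IsProbabilityMeasure G]
    (hF : F (Iio 0) = 0) (hG : G (Iio 0) = 0) (h : ∀ s, 0 ≤ s → LS F s = LS G s) : F = G := by
  have hmT : Measurable IsLT.toI := IsLT.continuous_toI.measurable
  have : IsProbabilityMeasure (F.map IsLT.toI) :=
    Measure.isProbabilityMeasure_map hmT.aemeasurable
  have : IsProbabilityMeasure (G.map IsLT.toI) :=
    Measure.isProbabilityMeasure_map hmT.aemeasurable
  have mom : ∀ {H : Measure ℝ} [IsProbabilityMeasure H] (_ : H (Iio 0) = 0) (n : ℕ),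
      ∫ v : unitInterval, (v : ℝ) ^ n ∂(H.map IsLT.toI) = LS H n := by
    intro H _ hH n
    rw [integral_map hmT.aemeasurable (by fun_prop : Continuous _).aestronglyMeasurable, LS]
    refine integral_congr_ae ?_
    filter_upwards [ae_nn hH] with x hx
    simp only [IsLT.toI, max_eq_left hx]
    rw [← Real.exp_nat_mul]; congr 1; ring
  have int : ∀ (H : Measure unitInterval) [IsProbabilityMeasure H] (f : unitInterval → ℝ),
      Continuous f → Integrable f H := by
    intro H _ f hf
    exact hf.integrable_of_hasCompactSupport (HasCompactSupport.of_compactSpace f)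
  have poly : ∀ p : Polynomial ℝ, ∫ v : unitInterval, p.eval (v : ℝ) ∂(F.map IsLT.toI)
      = ∫ v : unitInterval, p.eval (v : ℝ) ∂(G.map IsLT.toI) := by
    intro p
    induction p using Polynomial.induction_on' with
    | add p q hp hq =>
      simp only [Polynomial.eval_add]
      rw [integral_add (int _ _ (by fun_prop)) (int _ _ (by fun_prop)),
        integral_add (int _ _ (by fun_prop)) (int _ _ (by fun_prop)), hp, hq]
    | monomial n a =>
      simp only [Polynomial.eval_monomial]
      rw [integral_const_mul, integral_const_mul, mom hF, mom hG, h _ n.cast_nonneg]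
  have key : F.map IsLT.toI = G.map IsLT.toI := by
    refine ext_of_forall_integral_eq_of_IsFiniteMeasure fun f => ?_
    refine eq_of_forall_dist_le fun ε hε => ?_
    obtain ⟨p, hp⟩ := exists_polynomial_near_continuousMap 0 1 f.toContinuousMap (ε / 2)
      (half_pos hε)
    have hp' : ∀ v : unitInterval, |f v - p.eval (v : ℝ)| ≤ ε / 2 := by
      intro v
      have := (ContinuousMap.norm_coe_le_norm _ v).trans hp.le
      rw [abs_sub_comm]
      simpa using this
    have est : ∀ (H : Measure unitInterval) [IsProbabilityMeasure H],
        |∫ v, f v ∂H - ∫ v : unitInterval, p.eval (v : ℝ) ∂H| ≤ ε / 2 := by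
      intro H _
      rw [← integral_sub (int _ _ f.continuous) (int _ _ (by fun_prop))]
      have := norm_integral_le_of_norm_le_const (μ := H)
        (f := fun v : unitInterval => f v - p.eval (v : ℝ)) (C := ε / 2) (ae_of_all _ hp')
      simpa using this
    have e1 := est (F.map IsLT.toI)
    have e2 := est (G.map IsLT.toI)
    rw [poly p] at e1
    rw [Real.dist_eq]
    rw [abs_le] at *
    constructor <;> linarith
  have back : ∀ {H : Measure ℝ} (_ : H (Iio 0) = 0),
      (H.map IsLT.toI).map (fun v : unitInterval => -Real.log (v : ℝ)) = H := by
    intro H hH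
    rw [Measure.map_map (by fun_prop) hmT]
    conv_rhs => rw [← Measure.map_id (μ := H)]
    refine Measure.map_congr ?_
    filter_upwards [ae_nn hH] with x hx
    exact IsLT.log_toI hx
  rw [← back hF, ← back hG, key]

/-- Mixtures of a continuous family of Laplace transforms, as limits of countable mixtures
obtained by discretising the parameter. -/
lemma IsLT.mix {φ : ℝ → ℝ → ℝ} (h : ∀ i, 0 ≤ i → IsLT (φ i))
    (hc : ∀ s, 0 ≤ s → Continuous fun i => φ i s) (ν : Measure ℝ) [IsProbabilityMeasure ν]
    (hν : ν (Iio 0) = 0) : IsLT (fun s => ∫ i, φ i s ∂ν) := by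
  have hb : ∀ i s, 0 ≤ i → 0 ≤ s → ‖φ i s‖ ≤ 1 := fun i s hi hs => by
    rw [Real.norm_eq_abs, abs_of_nonneg ((h i hi).nonneg hs)]
    exact (h i hi).le_one hs
  have hfm : ∀ n : ℕ, Measurable fun i : ℝ => ⌊i * ((n : ℝ) + 1)⌋₊ := fun n =>
    Nat.measurable_floor.comp (by fun_prop)
  have hq : ∀ (n k : ℕ), (0 : ℝ) ≤ (k : ℝ) / ((n : ℝ) + 1) := fun n k => by positivity
  refine IsLT.lim (φ := fun n s => ∫ i, φ ((⌊i * ((n : ℝ) + 1)⌋₊ : ℝ) / ((n : ℝ) + 1)) s ∂ν)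
    ?_ ?_ ?_
  · intro n
    have : IsProbabilityMeasure (ν.map fun i : ℝ => ⌊i * ((n : ℝ) + 1)⌋₊) :=
      Measure.isProbabilityMeasure_map (hfm n).aemeasurable
    refine (IsLT.mix_nat (φ := fun k => φ ((k : ℝ) / ((n : ℝ) + 1))) (fun k => h _ (hq n k))
      (ν.map fun i : ℝ => ⌊i * ((n : ℝ) + 1)⌋₊)).congr fun s hs => ?_
    rw [integral_map (hfm n).aemeasurable (measurable_of_countable _).aestronglyMeasurable]
  · intro s hs
    refine tendsto_integral_of_dominated_convergence (fun _ => (1 : ℝ)) ?_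
      (integrable_const _) ?_ ?_
    · intro n
      have : Measurable fun k : ℕ => φ ((k : ℝ) / ((n : ℝ) + 1)) s := measurable_of_countable _
      exact (this.comp (hfm n)).aestronglyMeasurable
    · intro n
      exact ae_of_all _ fun i => hb _ s (hq n _) hs
    · filter_upwards [ae_nn hν] with i hi
      have t1 : Tendsto (fun n : ℕ => ((n : ℝ) + 1)) atTop atTop :=
        tendsto_atTop_add_const_right _ _ tendsto_natCast_atTop_atTop
      have t2 := (tendsto_nat_floor_mul_div_atTop hi).comp t1
      exact ((hc s hs).tendsto i).comp t2
  · have : Tendsto (fun s => ∫ i, φ i s ∂ν) (𝓝[>] 0) (𝓝 (∫ _, (1 : ℝ) ∂ν)) := by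
      refine tendsto_integral_filter_of_dominated_convergence (fun _ => (1 : ℝ)) ?_ ?_
        (integrable_const _) ?_
      · filter_upwards [self_mem_nhdsWithin] with s hs
        exact (hc s (le_of_lt hs)).aestronglyMeasurable
      · filter_upwards [self_mem_nhdsWithin] with s hs
        filter_upwards [ae_nn hν] with i hi
        exact hb i s hi (le_of_lt hs)
      · filter_upwards [ae_nn hν] with i hi
        exact (h i hi).tendsto_one
    simpa using this

/-! ### Bernstein functions and subordination -/

/-- `ψ` agrees on `[0,∞)` with the Laplace exponent of a subordinator, that is, with a Bernstein
function vanishing at `0`: all functions `e^{-yψ}`, `y ≥ 0`, are Laplace transforms. -/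
structure IsBern (ψ : ℝ → ℝ) : Prop where
  nonneg : ∀ s, 0 ≤ s → 0 ≤ ψ s
  tendsto_zero : Tendsto ψ (𝓝[>] 0) (𝓝 0)
  isLT : ∀ y, 0 ≤ y → IsLT fun s => Real.exp (-(y * ψ s))

namespace IsBern

lemma id : IsBern fun s => s where
  nonneg _ hs := hs
  tendsto_zero := tendsto_nhdsWithin_of_tendsto_nhds tendsto_id
  isLT _ hy := IsLT.exp_neg_mul hy

/-- Compound Poisson exponents, through `e^{-r(1-φ)} = lim (1 - r/n + (r/n) φ)^n`. -/
lemma of_isLT {φ : ℝ → ℝ} (h : IsLT φ) {c : ℝ} (hc : 0 ≤ c) :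
    IsBern fun s => c * (1 - φ s) where
  nonneg s hs := mul_nonneg hc (sub_nonneg.2 (h.le_one hs))
  tendsto_zero := by
    have := (h.tendsto_one.const_sub 1).const_mul c
    simpa using this
  isLT y hy := by
    set r := y * c with hr
    have hr0 : 0 ≤ r := mul_nonneg hy hc
    -- the index is shifted by `⌈r⌉₊ + 1` so that `r / n ≤ 1`
    let N : ℕ → ℕ := fun n => n + (⌈r⌉₊ + 1)
    have hN : ∀ n, r / (N n : ℝ) ≤ 1 := fun n => by
      have h1 := Nat.le_ceil r
      have h2 : (⌈r⌉₊ : ℝ) ≤ N n := by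
        simp only [N]; push_cast; linarith [n.cast_nonneg (α := ℝ)]
      exact div_le_one_of_le₀ (h1.trans h2) (Nat.cast_nonneg _)
    refine IsLT.lim (φ := fun n s => ((1 - r / (N n : ℝ)) + r / (N n : ℝ) * φ s) ^ (N n)) ?_ ?_ ?_
    · intro n
      exact (h.binary (by positivity) (hN n)).pow _
    · intro s _
      have := (Real.tendsto_one_add_div_pow_exp (-(r * (1 - φ s)))).comp
        (tendsto_add_atTop_nat (⌈r⌉₊ + 1))
      have e : -(y * (c * (1 - φ s))) = -(r * (1 - φ s)) := by rw [hr]; ring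
      rw [e]
      refine this.congr fun n => ?_
      simp only [Function.comp, N]
      congr 1; ring
    · have := ((h.tendsto_one.const_sub 1).const_mul c).const_mul y |>.neg.rexp
      simpa using this

lemma lim {ψ : ℕ → ℝ → ℝ} {χ : ℝ → ℝ} (h : ∀ n, IsBern (ψ n))
    (hl : ∀ s, 0 ≤ s → Tendsto (fun n => ψ n s) atTop (𝓝 (χ s)))
    (h0 : Tendsto χ (𝓝[>] 0) (𝓝 0)) : IsBern χ where
  nonneg s hs := ge_of_tendsto' (hl s hs) fun n => (h n).nonneg s hs
  tendsto_zero := h0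
  isLT y hy := by
    refine IsLT.lim (fun n => (h n).isLT y hy) (fun s hs => ((hl s hs).const_mul y).neg.rexp) ?_
    have := (h0.const_mul y).neg.rexp
    simpa using this

/-- The transform of a gamma-distributed time of a subordinator. -/
lemma rpow_neg {ψ : ℝ → ℝ} (h : IsBern ψ) {lam a : ℝ} (hlam : 0 < lam) (ha : 0 ≤ a) :
    IsLT fun s => (1 + lam * ψ s) ^ (-a) := by
  rcases ha.eq_or_lt with rfl | ha
  · exact IsLT.one.congr (by simp)
  have hr : 0 < lam⁻¹ := inv_pos.2 hlam
  have := ProbabilityTheory.isProbabilityMeasure_gammaMeasure ha hr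
  have hg0 : ProbabilityTheory.gammaMeasure a lam⁻¹ (Iio 0) = 0 := by
    rw [ProbabilityTheory.gammaMeasure, withDensity_apply _ measurableSet_Iio]
    exact ProbabilityTheory.lintegral_gammaPDF_of_nonpos le_rfl
  refine (IsLT.mix (φ := fun y s => Real.exp (-(y * ψ s))) (fun y hy => h.isLT y hy)
    (fun s _ => by fun_prop) (ProbabilityTheory.gammaMeasure a lam⁻¹) hg0).congr fun s hs => ?_
  have hψ := h.nonneg s hs
  have hpos : 0 < lam⁻¹ + ψ s := by positivity
  have hm : Measurable (ProbabilityTheory.gammaPDF a lam⁻¹) :=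
    (ProbabilityTheory.measurable_gammaPDFReal a _).ennreal_ofReal
  rw [ProbabilityTheory.gammaMeasure, integral_withDensity_eq_integral_toReal_smul hm
    (ae_of_all _ fun _ => ENNReal.ofReal_lt_top)]
  have e : ∀ y, (ProbabilityTheory.gammaPDF a lam⁻¹ y).toReal • Real.exp (-(y * ψ s))
      = indicator (Ici 0) (fun y => lam⁻¹ ^ a / Real.Gamma a *
        (y ^ (a - 1) * Real.exp (-((lam⁻¹ + ψ s) * y)))) y := by
    intro y
    rw [ProbabilityTheory.gammaPDF, ENNReal.toReal_ofReal
      (ProbabilityTheory.gammaPDFReal_nonneg ha hr y), ProbabilityTheory.gammaPDFReal]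
    by_cases hy : 0 ≤ y
    · rw [if_pos hy, indicator_of_mem (mem_Ici.2 hy), smul_eq_mul, mul_assoc, mul_assoc,
        ← Real.exp_add]
      congr 3; ring_nf
    · rw [if_neg hy, indicator_of_notMem (by simpa using hy), zero_smul]
  simp_rw [e]
  rw [integral_indicator measurableSet_Ici, integral_Ici_eq_integral_Ioi, integral_const_mul,
    Real.integral_rpow_mul_exp_neg_mul_Ioi ha hpos]
  have hG := (Real.Gamma_pos_of_pos ha).ne'
  have e1 : 1 + lam * ψ s = lam * (lam⁻¹ + ψ s) := by field_simp
  rw [e1, Real.rpow_neg (by positivity), Real.mul_rpow hlam.le hpos.le, one_div,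
    Real.inv_rpow hpos.le, Real.inv_rpow hlam.le]
  field_simp

lemma power_mixture {ψ : ℝ → ℝ} (h : IsBern ψ) {lam : ℝ} (hlam : 0 < lam) (FA : Measure ℝ)
    [IsProbabilityMeasure FA] (hA : FA (Iio 0) = 0) :
    IsLT fun s => ∫ a, (1 + lam * ψ s) ^ (-a) ∂FA := by
  refine IsLT.mix (φ := fun a s => (1 + lam * ψ s) ^ (-a)) (fun a ha => h.rpow_neg hlam ha) ?_
    FA hA
  intro s hs
  have : 0 < 1 + lam * ψ s := by have := h.nonneg s hs; positivity
  exact Continuous.rpow continuous_const continuous_neg fun _ => Or.inl this.ne'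

end IsBern

/-! ### The mixture functional -/

/-- `φ` is a Laplace transform with derivative `-m` at `0`, that is, of a distribution with
finite mean `m`. -/
structure LTMean (φ : ℝ → ℝ) (m : ℝ) : Prop where
  isLT : IsLT φ
  meas : Measurable φ
  le : ∀ y, 0 ≤ y → 1 - φ y ≤ m * y
  lim : Tendsto (fun y => (1 - φ y) / y) (𝓝[>] 0) (𝓝 m)

/-- The integrand `(1 - φ(tx))/t` of `σ`, continuously extended to `t = 0`. -/
noncomputable def kerS (φ : ℝ → ℝ) (m x t : ℝ) : ℝ :=
  if t = 0 then m * x else (1 - φ (t * x)) / t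

/-- The functional `φ ↦ σ`, acting on the transform `φ` rather than on the measure. -/
noncomputable def mixS (φ : ℝ → ℝ) (ν : Measure ℝ) (m x : ℝ) : ℝ := ∫ t, kerS φ m x t ∂ν

lemma sigmaT_eq (F FT : Measure ℝ) (μ s : ℝ) : sigmaT F FT μ s = mixS (LS F) FT μ s := rfl

namespace LTMean

variable {φ : ℝ → ℝ} {m : ℝ}

lemma mean_nonneg (h : LTMean φ m) : 0 ≤ m := by
  have h1 := h.le 1 zero_le_one
  have h2 := h.isLT.le_one zero_le_one
  linarith

lemma kerS_nonneg (h : LTMean φ m) {x t : ℝ} (hx : 0 ≤ x) (ht : 0 ≤ t) : 0 ≤ kerS φ m x t := by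
  unfold kerS
  split_ifs
  · exact mul_nonneg h.mean_nonneg hx
  · exact div_nonneg (sub_nonneg.2 (h.isLT.le_one (mul_nonneg ht hx))) ht

lemma kerS_le (h : LTMean φ m) {x t : ℝ} (hx : 0 ≤ x) (ht : 0 ≤ t) : kerS φ m x t ≤ m * x := by
  unfold kerS
  split_ifs with h0
  · exact le_rfl
  · rw [div_le_iff₀ (lt_of_le_of_ne ht (Ne.symm h0))]
    have := h.le (t * x) (mul_nonneg ht hx)
    linarith

lemma kerS_norm_le (h : LTMean φ m) {x t : ℝ} (hx : 0 ≤ x) (ht : 0 ≤ t) :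
    ‖kerS φ m x t‖ ≤ m * x := by
  rw [Real.norm_eq_abs, abs_of_nonneg (h.kerS_nonneg hx ht)]
  exact h.kerS_le hx ht

lemma measurable_kerS (h : LTMean φ m) (x : ℝ) : Measurable (kerS φ m x) := by
  have := h.meas
  unfold kerS
  exact Measurable.ite (measurableSet_singleton 0) (by fun_prop) (by fun_prop)

variable {ν : Measure ℝ}

lemma mixS_nonneg (h : LTMean φ m) (hν : ν (Iio 0) = 0) {x : ℝ} (hx : 0 ≤ x) :
    0 ≤ mixS φ ν m x := by
  refine integral_nonneg_of_ae ?_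
  filter_upwards [ae_nn hν] with t ht
  exact h.kerS_nonneg hx ht

variable [IsProbabilityMeasure ν]

lemma integrable_kerS (h : LTMean φ m) (hν : ν (Iio 0) = 0) {x : ℝ} (hx : 0 ≤ x) :
    Integrable (kerS φ m x) ν := by
  refine Integrable.mono' (integrable_const (m * x)) (h.measurable_kerS x).aestronglyMeasurable ?_
  filter_upwards [ae_nn hν] with t ht
  exact h.kerS_norm_le hx ht

lemma mixS_le (h : LTMean φ m) (hν : ν (Iio 0) = 0) {x : ℝ} (hx : 0 ≤ x) :
    mixS φ ν m x ≤ m * x := by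
  have := integral_mono_ae (h.integrable_kerS hν hx) (integrable_const (m * x)) (by
    filter_upwards [ae_nn hν] with t ht
    exact h.kerS_le hx ht)
  simpa [mixS] using this

/-- `σ` is a Bernstein function, also after an inner substitution `ψ`. With `t` replaced by
`max t ε` the mixture has the compound Poisson form `c (1 - χ)`; then `ε → 0`. -/
lemma isBern (h : LTMean φ m) (hν : ν (Iio 0) = 0) {ψ : ℝ → ℝ} (hψ : ∀ s, 0 ≤ s → 0 ≤ ψ s)
    (hψ0 : Tendsto ψ (𝓝[>] 0) (𝓝 0)) (hφψ : ∀ t, 0 ≤ t → IsLT fun s => φ (t * ψ s)) :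
    IsBern fun s => mixS φ ν m (ψ s) := by
  have hε : ∀ n : ℕ, (0 : ℝ) < 1 / ((n : ℝ) + 1) := fun n => Nat.one_div_pos_of_nat
  refine IsBern.lim (ψ := fun n s => ∫ t, kerS φ m (ψ s) (max t (1 / ((n : ℝ) + 1))) ∂ν)
    ?_ ?_ ?_
  · intro n
    set ε : ℝ := 1 / ((n : ℝ) + 1) with hεd
    have hε0 : 0 < ε := hε n
    have hmax : ∀ t, 0 < max t ε := fun t => lt_max_of_lt_right hε0
    have hinv : ∀ t, (max t ε)⁻¹ ≤ ε⁻¹ := fun t => inv_anti₀ hε0 (le_max_right _ _)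
    have hcont : Continuous fun t => (max t ε)⁻¹ :=
      Continuous.inv₀ (by fun_prop) fun t => (hmax t).ne'
    have hint : Integrable (fun t => (max t ε)⁻¹) ν := by
      refine Integrable.mono' (integrable_const ε⁻¹) hcont.aestronglyMeasurable
        (ae_of_all _ fun t => ?_)
      rw [Real.norm_eq_abs, abs_of_pos (inv_pos.2 (hmax t))]
      exact hinv t
    set c := ∫ t, (max t ε)⁻¹ ∂ν with hc
    have hc0 : 0 < c := by
      rw [hc, integral_pos_iff_support_of_nonneg (fun t => (inv_pos.2 (hmax t)).le) hint]
      have : Function.support (fun t => (max t ε)⁻¹) = univ := by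
        ext t; simp [(hmax t).ne']
      rw [this, measure_univ]; exact one_pos
    let d : ℝ → ℝ := fun t => c⁻¹ * (max t ε)⁻¹
    have hd0 : ∀ t, 0 ≤ d t := fun t => by have := hmax t; positivity
    have hdm : Measurable d := (hcont.const_mul c⁻¹ : Continuous _).measurable
    have hQp : IsProbabilityMeasure (ν.withDensity fun t => ENNReal.ofReal (d t)) := by
      refine ⟨?_⟩
      rw [withDensity_apply _ MeasurableSet.univ, setLIntegral_univ,
        ← ofReal_integral_eq_lintegral_ofReal (hint.const_mul _) (ae_of_all _ hd0),
        integral_const_mul, ← hc, inv_mul_cancel₀ hc0.ne', ENNReal.ofReal_one]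
    have hQ0 : (ν.withDensity fun t => ENNReal.ofReal (d t)) (Iio 0) = 0 :=
      withDensity_absolutelyContinuous _ _ hν
    have hχ := IsLT.mix (φ := fun t s => φ (max t ε * ψ s)) (fun t _ => hφψ _ (hmax t).le)
      (fun s hs => h.isLT.continuousOn.comp_continuous (by fun_prop)
        fun t => mul_nonneg (hmax t).le (hψ s hs))
      (ν.withDensity fun t => ENNReal.ofReal (d t)) hQ0
    have hB := IsBern.of_isLT hχ hc0.le
    have key : ∀ s, 0 ≤ s → (∫ t, kerS φ m (ψ s) (max t ε) ∂ν) = c * (1 - ∫ t, φ (max t ε * ψ s)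
        ∂(ν.withDensity fun t => ENNReal.ofReal (d t))) := by
      intro s hs
      rw [integral_withDensity_eq_integral_toReal_smul hdm.ennreal_ofReal
        (ae_of_all _ fun _ => ENNReal.ofReal_lt_top)]
      have hi2 : Integrable (fun t => (max t ε)⁻¹ * φ (max t ε * ψ s)) ν := by
        have := h.meas
        refine Integrable.mono' hint (hcont.measurable.mul
          (by fun_prop)).aestronglyMeasurable (ae_of_all _ fun t => ?_)
        have a1 := h.isLT.nonneg (mul_nonneg (hmax t).le (hψ s hs))
        have a2 := h.isLT.le_one (mul_nonneg (hmax t).le (hψ s hs))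
        have a3 := inv_pos.2 (hmax t)
        rw [Real.norm_eq_abs, abs_of_nonneg (by positivity)]
        exact mul_le_of_le_one_right a3.le a2
      have e1 : ∀ t, (ENNReal.ofReal (d t)).toReal • φ (max t ε * ψ s)
          = c⁻¹ * ((max t ε)⁻¹ * φ (max t ε * ψ s)) := fun t => by
        rw [ENNReal.toReal_ofReal (hd0 t)]; simp only [d, smul_eq_mul]; ring
      have e2 : ∀ t, kerS φ m (ψ s) (max t ε)
          = (max t ε)⁻¹ - (max t ε)⁻¹ * φ (max t ε * ψ s) := fun t => by
        rw [kerS, if_neg (hmax t).ne']; field_simp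
      simp_rw [e1, e2]
      rw [integral_const_mul, integral_sub hint hi2, ← hc, mul_sub, mul_one,
        mul_inv_cancel_left₀ hc0.ne']
    refine ⟨fun s hs => ?_, ?_, fun y hy => (hB.isLT y hy).congr fun s hs => ?_⟩
    · rw [key s hs]; exact hB.nonneg s hs
    · refine hB.tendsto_zero.congr' ?_
      filter_upwards [self_mem_nhdsWithin] with s hs
      exact (key s (le_of_lt hs)).symm
    · rw [key s hs]
  · intro s hs
    refine tendsto_integral_of_dominated_convergence (fun _ => m * ψ s) ?_
      (integrable_const _) ?_ ?_
    · intro n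
      exact ((h.measurable_kerS _).comp (by fun_prop)).aestronglyMeasurable
    · intro n
      exact ae_of_all _ fun t => h.kerS_norm_le (hψ s hs) (le_max_of_le_right (hε n).le)
    · have t0 := tendsto_one_div_add_atTop_nhds_zero_nat (𝕜 := ℝ)
      filter_upwards [ae_nn hν] with t ht
      rcases ht.eq_or_lt with rfl | ht
      · have e : ∀ n : ℕ, kerS φ m (ψ s) (max 0 (1 / ((n : ℝ) + 1)))
            = (1 - φ (1 / ((n : ℝ) + 1) * ψ s)) / (1 / ((n : ℝ) + 1)) := fun n => by
          rw [max_eq_right (hε n).le, kerS, if_neg (hε n).ne']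
        simp_rw [e]
        rw [kerS, if_pos rfl]
        rcases (hψ s hs).eq_or_lt with h0 | h0
        · simp [← h0, h.isLT.at_zero]
        · have t1 : Tendsto (fun n : ℕ => 1 / ((n : ℝ) + 1) * ψ s) atTop (𝓝[>] 0) := by
            refine tendsto_nhdsWithin_iff.2 ⟨?_, Eventually.of_forall fun n => mul_pos (hε n) h0⟩
            simpa using t0.mul_const (ψ s)
          refine ((h.lim.comp t1).mul_const (ψ s)).congr fun n => ?_
          have := hε n
          simp only [Function.comp]
          field_simp
      · refine tendsto_const_nhds.congr' ?_
        filter_upwards [t0.eventually (gt_mem_nhds ht)] with n hn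
        rw [max_eq_left hn.le]
  · have u : Tendsto (fun s => m * ψ s) (𝓝[>] 0) (𝓝 0) := by simpa using hψ0.const_mul m
    refine tendsto_of_tendsto_of_tendsto_of_le_of_le' tendsto_const_nhds u ?_ ?_
    · filter_upwards [self_mem_nhdsWithin] with s hs
      exact h.mixS_nonneg hν (hψ s (le_of_lt hs))
    · filter_upwards [self_mem_nhdsWithin] with s hs
      exact h.mixS_le hν (hψ s (le_of_lt hs))

end LTMean

/-! ### Moments and second-order expansions at the origin -/

lemma exp_neg_taylor_nonneg (y : ℝ) : 0 ≤ Real.exp (-y) - 1 + y := by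
  linarith [Real.add_one_le_exp (-y)]

lemma exp_neg_taylor_le {y : ℝ} (hy : 0 ≤ y) : Real.exp (-y) - 1 + y ≤ 1 / 2 * y ^ 2 := by
  have h1 := Real.quadratic_le_exp_of_nonneg hy
  have h2 : Real.exp (-y) * Real.exp y = 1 := by rw [← Real.exp_add]; simp
  have h3 := Real.exp_pos (-y)
  have h4 : Real.exp (-y) * (1 + y + y ^ 2 / 2) ≤ 1 := by
    exact (mul_le_mul_of_nonneg_left h1 h3.le).trans_eq h2
  have h5 : Real.exp (-y) * (1 + y + y ^ 2 / 2)
      ≤ (1 - y + y ^ 2 / 2) * (1 + y + y ^ 2 / 2) := by nlinarith [sq_nonneg (y ^ 2)]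
  have := le_of_mul_le_mul_right h5 (by positivity)
  linarith

lemma exp_neg_taylor_tendsto :
    Tendsto (fun y : ℝ => (Real.exp (-y) - 1 + y) / y ^ 2) (𝓝[>] 0) (𝓝 (1 / 2)) := by
  have l : Tendsto (fun y : ℝ => 1 / 2 - y) (𝓝[>] 0) (𝓝 (1 / 2)) := by
    have : Tendsto (fun y : ℝ => 1 / 2 - y) (𝓝 0) (𝓝 (1 / 2 - 0)) := by
      exact (Continuous.tendsto (by fun_prop) 0)
    rw [sub_zero] at this
    exact this.mono_left nhdsWithin_le_nhds
  refine tendsto_of_tendsto_of_tendsto_of_le_of_le' l tendsto_const_nhds ?_ ?_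
  · filter_upwards [Ioo_mem_nhdsGT one_pos] with y hy
    have h := Real.exp_bound (x := -y) (by rw [abs_neg, abs_of_pos hy.1]; exact hy.2.le)
      (n := 3) (by norm_num)
    rw [abs_neg, abs_of_pos hy.1] at h
    simp only [Finset.sum_range_succ, Finset.sum_range_zero] at h
    norm_num [Nat.factorial] at h
    have h1 := (abs_le.1 h).1
    have hy0 := hy.1
    rw [le_div_iff₀ (by positivity)]
    nlinarith [pow_pos hy0 3]
  · filter_upwards [self_mem_nhdsWithin] with y hy
    have hy0 : (0 : ℝ) < y := hy
    rw [div_le_iff₀ (by positivity)]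
    exact exp_neg_taylor_le hy0.le

lemma log_taylor_nonneg {x : ℝ} (hx : 0 ≤ x) : 0 ≤ x - Real.log (1 + x) := by
  linarith [Real.log_le_sub_one_of_pos (by linarith : 0 < 1 + x)]

lemma log_taylor_le {x : ℝ} (hx : 0 ≤ x) : x - Real.log (1 + x) ≤ 1 / 2 * x ^ 2 := by
  have h := Real.le_log_one_add_of_nonneg hx
  have h2 : x - 1 / 2 * x ^ 2 ≤ 2 * x / (x + 2) := by
    rw [le_div_iff₀ (by positivity)]
    nlinarith [pow_nonneg hx 3]
  linarith

lemma log_taylor_tendsto :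
    Tendsto (fun x : ℝ => (x - Real.log (1 + x)) / x ^ 2) (𝓝[>] 0) (𝓝 (1 / 2)) := by
  have l : Tendsto (fun y : ℝ => 1 / 2 - 2 * y) (𝓝[>] 0) (𝓝 (1 / 2)) := by
    have : Tendsto (fun y : ℝ => 1 / 2 - 2 * y) (𝓝 0) (𝓝 (1 / 2 - 2 * 0)) := by
      exact (Continuous.tendsto (by fun_prop) 0)
    rw [mul_zero, sub_zero] at this
    exact this.mono_left nhdsWithin_le_nhds
  refine tendsto_of_tendsto_of_tendsto_of_le_of_le' l tendsto_const_nhds ?_ ?_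
  · filter_upwards [Ioo_mem_nhdsGT (by norm_num : (0 : ℝ) < 1 / 2)] with y hy
    have h := Real.abs_log_sub_add_sum_range_le (x := -y)
      (by rw [abs_neg, abs_of_pos hy.1]; linarith [hy.2]) 2
    rw [abs_neg, abs_of_pos hy.1] at h
    simp only [Finset.sum_range_succ, Finset.sum_range_zero] at h
    norm_num at h
    have h1 := (abs_le.1 h).2
    have hy0 := hy.1
    have h3 : y ^ 3 / (1 - y) ≤ 2 * y ^ 3 := by
      rw [div_le_iff₀ (by linarith [hy.2])]
      nlinarith [pow_pos hy0 3, hy.2]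
    rw [le_div_iff₀ (by positivity)]
    nlinarith
  · filter_upwards [self_mem_nhdsWithin] with y hy
    have hy0 : (0 : ℝ) < y := hy
    rw [div_le_iff₀ (by positivity)]
    exact log_taylor_le hy0.le

/-- If `f s → c s` at first order with `c > 0`, then `f s → 0` through positive values. -/
lemma tendsto_nhdsGT_of_div {f : ℝ → ℝ} {c : ℝ} (hc : 0 < c)
    (h : Tendsto (fun s => f s / s) (𝓝[>] 0) (𝓝 c)) : Tendsto f (𝓝[>] 0) (𝓝[>] 0) := by
  refine tendsto_nhdsWithin_iff.2 ⟨?_, ?_⟩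
  · have h1 : Tendsto (fun s : ℝ => s) (𝓝[>] 0) (𝓝 0) :=
      tendsto_nhdsWithin_of_tendsto_nhds tendsto_id
    have h2 := h.mul h1
    rw [mul_zero] at h2
    refine h2.congr' ?_
    filter_upwards [self_mem_nhdsWithin] with s hs
    exact div_mul_cancel₀ _ (ne_of_gt hs)
  · filter_upwards [self_mem_nhdsWithin, h.eventually (lt_mem_nhds hc)] with s hs h1
    exact (div_pos_iff_of_pos_right hs).1 h1

/-- Convergence of integrals of functions bounded above by their pointwise limit; no finiteness
of the limit integral is assumed. -/
lemma lintegral_tendsto_of_le {ν : Measure ℝ} {f : ℝ → ℝ → ENNReal} {g : ℝ → ENNReal}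
    (hm : ∀ s, Measurable (f s)) (hle : ∀ s, 0 < s → ∀ᵐ x ∂ν, f s x ≤ g x)
    (hl : ∀ᵐ x ∂ν, Tendsto (fun s => f s x) (𝓝[>] 0) (𝓝 (g x))) :
    Tendsto (fun s => ∫⁻ x, f s x ∂ν) (𝓝[>] 0) (𝓝 (∫⁻ x, g x ∂ν)) := by
  refine tendsto_of_le_liminf_of_limsup_le ?_ ?_
  · calc ∫⁻ x, g x ∂ν = ∫⁻ x, liminf (fun s => f s x) (𝓝[>] 0) ∂ν := by
          refine lintegral_congr_ae ?_
          filter_upwards [hl] with x hx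
          exact hx.liminf_eq.symm
      _ ≤ _ := lintegral_liminf_le fun s => hm s
  · refine limsup_le_of_le (h := ?_)
    filter_upwards [self_mem_nhdsWithin] with s hs
    exact lintegral_mono_ae (hle s hs)

section moments

variable {F : Measure ℝ}

lemma integrable_id_of_lintegral (h : F (Iio 0) = 0)
    (hfin : (∫⁻ x, ENNReal.ofReal x ∂F) ≠ ⊤) : Integrable (fun x => x) F := by
  refine ⟨measurable_id.aestronglyMeasurable, ?_⟩
  rw [hasFiniteIntegral_iff_ofReal (ae_nn h)]
  exact hfin.lt_top

lemma integral_id_eq (h : F (Iio 0) = 0) :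
    ∫ x, x ∂F = (∫⁻ x, ENNReal.ofReal x ∂F).toReal :=
  integral_eq_lintegral_of_nonneg_ae (ae_nn h) measurable_id.aestronglyMeasurable

variable [IsProbabilityMeasure F]

lemma integrable_one_sub_exp (h : F (Iio 0) = 0) {s : ℝ} (hs : 0 ≤ s) :
    Integrable (fun x => 1 - Real.exp (-(s * x))) F :=
  (integrable_const _).sub (integrable_exp_neg h hs)

lemma one_sub_LS (h : F (Iio 0) = 0) {s : ℝ} (hs : 0 ≤ s) :
    1 - LS F s = ∫ x, (1 - Real.exp (-(s * x))) ∂F := by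
  rw [integral_sub (integrable_const _) (integrable_exp_neg h hs)]
  simp [LS]

/-- The mean as a derivative at `0`, possibly infinite. -/
lemma mean_lim (h : F (Iio 0) = 0) :
    Tendsto (fun s => ENNReal.ofReal ((1 - LS F s) / s)) (𝓝[>] 0)
      (𝓝 (∫⁻ x, ENNReal.ofReal x ∂F)) := by
  have key := lintegral_tendsto_of_le (ν := F)
    (f := fun s x => ENNReal.ofReal ((1 - Real.exp (-(s * x))) / s))
    (g := fun x => ENNReal.ofReal x) (fun s => by fun_prop) ?_ ?_
  · refine key.congr' ?_
    filter_upwards [self_mem_nhdsWithin] with s hs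
    have hs0 : (0 : ℝ) < s := hs
    rw [← ofReal_integral_eq_lintegral_ofReal ((integrable_one_sub_exp h hs0.le).div_const s),
      integral_div, one_sub_LS h hs0.le]
    filter_upwards [ae_nn h] with x hx
    exact div_nonneg (sub_nonneg.2 (exp_neg_le_one hs0.le hx)) hs0.le
  · intro s hs
    refine ae_of_all _ fun x => ENNReal.ofReal_le_ofReal ?_
    rw [div_le_iff₀ hs]
    linarith [Real.add_one_le_exp (-(s * x))]
  · refine ae_of_all _ fun x => ENNReal.tendsto_ofReal ?_
    have hd : HasDerivAt (fun s : ℝ => -Real.exp (-(s * x))) x 0 := by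
      have h1 : HasDerivAt (fun s : ℝ => -(s * x)) (-(1 * x)) 0 :=
        ((hasDerivAt_id (0 : ℝ)).mul_const x).neg
      have h2 := h1.exp.fun_neg
      simp only [zero_mul, neg_zero, Real.exp_zero, one_mul, neg_neg] at h2
      exact h2
    have := hd.tendsto_slope_zero_right
    refine this.congr fun s => ?_
    simp only [zero_add, smul_eq_mul, zero_mul, neg_zero, Real.exp_zero]
    rw [div_eq_inv_mul]
    ring

lemma taylor_LS (h : F (Iio 0) = 0) {m : ℝ} (hi : Integrable (fun x => x) F)
    (hm : ∫ x, x ∂F = m) {s : ℝ} (hs : 0 ≤ s) :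
    Integrable (fun x => Real.exp (-(s * x)) - 1 + s * x) F ∧
    LS F s - 1 + m * s = ∫ x, (Real.exp (-(s * x)) - 1 + s * x) ∂F := by
  have i1 := integrable_exp_neg h hs
  have i2 : Integrable (fun x => Real.exp (-(s * x)) - 1) F := i1.sub (integrable_const _)
  refine ⟨i2.add (hi.const_mul s), ?_⟩
  rw [integral_add i2 (hi.const_mul s), integral_sub i1 (integrable_const _),
    integral_const_mul, hm]
  simp [LS, mul_comm]

lemma taylor_LS_nonneg (h : F (Iio 0) = 0) {m : ℝ} (hi : Integrable (fun x => x) F)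
    (hm : ∫ x, x ∂F = m) {s : ℝ} (hs : 0 ≤ s) : 0 ≤ LS F s - 1 + m * s := by
  rw [(taylor_LS h hi hm hs).2]
  exact integral_nonneg fun x => exp_neg_taylor_nonneg _

lemma taylor_LS_le (h : F (Iio 0) = 0) {m : ℝ} (hi : Integrable (fun x => x) F)
    (hi2 : Integrable (fun x => x ^ 2) F)
    (hm : ∫ x, x ∂F = m) {s : ℝ} (hs : 0 ≤ s) :
    LS F s - 1 + m * s ≤ (1 / 2 * ∫ x, x ^ 2 ∂F) * s ^ 2 := by
  rw [(taylor_LS h hi hm hs).2, ← integral_const_mul, ← integral_mul_const]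
  refine integral_mono_ae (taylor_LS h hi hm hs).1 ((hi2.const_mul _).mul_const _) ?_
  filter_upwards [ae_nn h] with x hx
  have := exp_neg_taylor_le (mul_nonneg hs hx)
  nlinarith

/-- Half the second moment as the second-order coefficient at `0`, possibly infinite. -/
lemma second_lim (h : F (Iio 0) = 0) {m : ℝ} (hi : Integrable (fun x => x) F)
    (hm : ∫ x, x ∂F = m) :
    Tendsto (fun s => ENNReal.ofReal ((LS F s - 1 + m * s) / s ^ 2)) (𝓝[>] 0)
      (𝓝 (∫⁻ x, ENNReal.ofReal (1 / 2 * x ^ 2) ∂F)) := by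
  have key := lintegral_tendsto_of_le (ν := F)
    (f := fun s x => ENNReal.ofReal ((Real.exp (-(s * x)) - 1 + s * x) / s ^ 2))
    (g := fun x => ENNReal.ofReal (1 / 2 * x ^ 2)) (fun s => by fun_prop) ?_ ?_
  · refine key.congr' ?_
    filter_upwards [self_mem_nhdsWithin] with s hs
    have hs0 : (0 : ℝ) < s := hs
    rw [← ofReal_integral_eq_lintegral_ofReal ((taylor_LS h hi hm hs0.le).1.div_const _),
      integral_div, (taylor_LS h hi hm hs0.le).2]
    exact ae_of_all _ fun x => div_nonneg (exp_neg_taylor_nonneg _) (by positivity)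
  · intro s hs
    filter_upwards [ae_nn h] with x hx
    refine ENNReal.ofReal_le_ofReal ?_
    rw [div_le_iff₀ (by positivity)]
    have := exp_neg_taylor_le (mul_nonneg hs.le hx)
    nlinarith
  · filter_upwards [ae_nn h] with x hx
    refine ENNReal.tendsto_ofReal ?_
    rcases hx.eq_or_lt with rfl | hx
    · simp
    · have t1 : Tendsto (fun s : ℝ => s * x) (𝓝[>] 0) (𝓝[>] 0) := by
        refine tendsto_nhdsGT_of_div hx (tendsto_const_nhds.congr' ?_)
        filter_upwards [self_mem_nhdsWithin] with s hs
        rw [mul_div_cancel_left₀ _ (ne_of_gt hs)]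
      refine ((exp_neg_taylor_tendsto.comp t1).mul_const (x ^ 2)).congr' ?_
      filter_upwards [self_mem_nhdsWithin] with s hs
      have hs0 : s ≠ 0 := ne_of_gt hs
      simp only [Function.comp]
      field_simp

lemma LTMean_LS (h : F (Iio 0) = 0) {m : ℝ} (hi : Integrable (fun x => x) F)
    (hm : ∫ x, x ∂F = m) : LTMean (LS F) m where
  isLT := ⟨F, inferInstance, h, fun _ _ => rfl⟩
  meas := measurable_LS F
  le y hy := by linarith [taylor_LS_nonneg h hi hm hy]
  lim := by
    have h1 := mean_lim h
    rw [← ofReal_integral_eq_lintegral_ofReal hi (ae_nn h), hm] at h1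
    have h2 := (ENNReal.tendsto_toReal ENNReal.ofReal_ne_top).comp h1
    have hm0 : 0 ≤ m := hm ▸ integral_nonneg_of_ae (ae_nn h)
    rw [ENNReal.toReal_ofReal hm0] at h2
    refine h2.congr' ?_
    filter_upwards [self_mem_nhdsWithin] with s hs
    exact ENNReal.toReal_ofReal (div_nonneg (sub_nonneg.2 (LS_le_one h (le_of_lt hs)))
      (le_of_lt hs))

/-- A two-sided quadratic bound on the transform at `0` determines the mean and bounds the second
moment. -/
lemma moments_of_taylor (h : F (Iio 0) = 0) {m M : ℝ} (hm : 0 ≤ m)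
    (h1 : ∀ s, 0 ≤ s → 0 ≤ LS F s - 1 + m * s)
    (h2 : ∀ s, 0 ≤ s → LS F s - 1 + m * s ≤ M * s ^ 2) :
    Integrable (fun x => x) F ∧ ∫ x, x ∂F = m ∧ Integrable (fun x => x ^ 2) F := by
  have l1 : Tendsto (fun s => (1 - LS F s) / s) (𝓝[>] 0) (𝓝 m) := by
    have l : Tendsto (fun s : ℝ => m - M * s) (𝓝[>] 0) (𝓝 m) := by
      have : Tendsto (fun y : ℝ => m - M * y) (𝓝 0) (𝓝 (m - M * 0)) :=
        (Continuous.tendsto (by fun_prop) 0)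
      rw [mul_zero, sub_zero] at this
      exact this.mono_left nhdsWithin_le_nhds
    refine tendsto_of_tendsto_of_tendsto_of_le_of_le' l tendsto_const_nhds ?_ ?_
    · filter_upwards [self_mem_nhdsWithin] with s hs
      rw [le_div_iff₀ hs]
      have := h2 s (le_of_lt hs)
      nlinarith
    · filter_upwards [self_mem_nhdsWithin] with s hs
      rw [div_le_iff₀ hs]
      have := h1 s (le_of_lt hs)
      linarith
  have e := tendsto_nhds_unique (mean_lim h) (ENNReal.tendsto_ofReal l1)
  have hi : Integrable (fun x => x) F :=
    integrable_id_of_lintegral h (by rw [e]; exact ENNReal.ofReal_ne_top)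
  have hm' : ∫ x, x ∂F = m := by
    rw [integral_id_eq h, e, ENNReal.toReal_ofReal hm]
  refine ⟨hi, hm', ?_⟩
  have l2 := second_lim h hi hm'
  have b : ∫⁻ x, ENNReal.ofReal (1 / 2 * x ^ 2) ∂F ≤ ENNReal.ofReal M := by
    refine le_of_tendsto l2 ?_
    filter_upwards [self_mem_nhdsWithin] with s hs
    have hs0 : (0 : ℝ) < s := hs
    refine ENNReal.ofReal_le_ofReal ?_
    rw [div_le_iff₀ (by positivity)]
    exact h2 s hs0.le
  have i2 : Integrable (fun x : ℝ => 1 / 2 * x ^ 2) F := by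
    refine ⟨(by fun_prop : Measurable _).aestronglyMeasurable, ?_⟩
    rw [hasFiniteIntegral_iff_ofReal (ae_of_all _ fun x => by positivity)]
    exact b.trans_lt ENNReal.ofReal_lt_top
  refine (i2.const_mul 2).congr (ae_of_all _ fun x => ?_)
  beta_reduce
  ring

end moments

namespace LTMean

variable {φ φ' : ℝ → ℝ} {m q : ℝ} {ν : Measure ℝ} [IsProbabilityMeasure ν]

lemma mixS_div_tendsto (h : LTMean φ m) (hν : ν (Iio 0) = 0) :
    Tendsto (fun s => mixS φ ν m s / s) (𝓝[>] 0) (𝓝 m) := by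
  have : Tendsto (fun s => ∫ t, kerS φ m s t / s ∂ν) (𝓝[>] 0) (𝓝 (∫ _, m ∂ν)) := by
    refine tendsto_integral_filter_of_dominated_convergence (fun _ => m) ?_ ?_
      (integrable_const _) ?_
    · exact Eventually.of_forall fun s =>
        ((h.measurable_kerS s).div_const s).aestronglyMeasurable
    · filter_upwards [self_mem_nhdsWithin] with s hs
      filter_upwards [ae_nn hν] with t ht
      have hs0 : (0 : ℝ) < s := hs
      rw [norm_div, Real.norm_of_nonneg hs0.le, div_le_iff₀ hs0]
      exact h.kerS_norm_le hs0.le ht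
    · filter_upwards [ae_nn hν] with t ht
      rcases ht.eq_or_lt with rfl | ht
      · refine tendsto_const_nhds.congr' ?_
        filter_upwards [self_mem_nhdsWithin] with s hs
        rw [kerS, if_pos rfl, mul_div_cancel_right₀ _ (ne_of_gt hs)]
      · have t1 : Tendsto (fun s : ℝ => t * s) (𝓝[>] 0) (𝓝[>] 0) := by
          refine tendsto_nhdsGT_of_div ht (tendsto_const_nhds.congr' ?_)
          filter_upwards [self_mem_nhdsWithin] with s hs
          rw [mul_div_cancel_right₀ _ (ne_of_gt hs)]
        refine (h.lim.comp t1).congr fun s => ?_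
        simp only [Function.comp]
        rw [kerS, if_neg ht.ne', div_div]
  simpa [integral_div, mixS] using this

lemma kerS_taylor (hq : ∀ y, 0 ≤ y → φ y - 1 + m * y ≤ q * y ^ 2)
    {s t : ℝ} (hs : 0 ≤ s) (ht : 0 ≤ t) : m * s - kerS φ m s t ≤ q * t * s ^ 2 := by
  rcases ht.eq_or_lt with rfl | ht
  · simp [kerS]
  · have h1 := hq (t * s) (by positivity)
    rw [kerS, if_neg ht.ne']
    have : m * s - (1 - φ (t * s)) / t = (φ (t * s) - 1 + m * (t * s)) / t := by
      field_simp; ring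
    rw [this, div_le_iff₀ ht]
    nlinarith

lemma mixS_taylor_le (h : LTMean φ m) (hν : ν (Iio 0) = 0)
    (hq : ∀ y, 0 ≤ y → φ y - 1 + m * y ≤ q * y ^ 2) (hi : Integrable (fun t => t) ν)
    {s : ℝ} (hs : 0 ≤ s) : m * s - mixS φ ν m s ≤ q * (∫ t, t ∂ν) * s ^ 2 := by
  have e : m * s - mixS φ ν m s = ∫ t, (m * s - kerS φ m s t) ∂ν := by
    rw [integral_sub (integrable_const _) (h.integrable_kerS hν hs)]
    simp [mixS]
  rw [e, ← integral_const_mul, ← integral_mul_const]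
  refine integral_mono_ae ((integrable_const _).sub (h.integrable_kerS hν hs))
    ((hi.const_mul q).mul_const _) ?_
  filter_upwards [ae_nn hν] with t ht
  exact kerS_taylor hq hs ht

/-- The mean of the mixing law `ν` appears in the second-order coefficient of `mixS`; it may be
infinite. -/
lemma mixS_taylor_tendsto (h : LTMean φ m) (hν : ν (Iio 0) = 0)
    (hq : ∀ y, 0 ≤ y → φ y - 1 + m * y ≤ q * y ^ 2)
    (hl : Tendsto (fun y => (φ y - 1 + m * y) / y ^ 2) (𝓝[>] 0) (𝓝 q)) :
    Tendsto (fun s => ENNReal.ofReal ((m * s - mixS φ ν m s) / s ^ 2)) (𝓝[>] 0)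
      (𝓝 (∫⁻ t, ENNReal.ofReal (q * t) ∂ν)) := by
  have key := lintegral_tendsto_of_le (ν := ν)
    (f := fun s t => ENNReal.ofReal ((m * s - kerS φ m s t) / s ^ 2))
    (g := fun t => ENNReal.ofReal (q * t))
    (fun s => by have := h.measurable_kerS s; fun_prop) ?_ ?_
  · refine key.congr' ?_
    filter_upwards [self_mem_nhdsWithin] with s hs
    have hs0 : (0 : ℝ) < s := hs
    have hi : Integrable (fun t => m * s - kerS φ m s t) ν :=
      (integrable_const _).sub (h.integrable_kerS hν hs0.le)
    rw [← ofReal_integral_eq_lintegral_ofReal (hi.div_const _), integral_div,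
      integral_sub (integrable_const _) (h.integrable_kerS hν hs0.le)]
    · simp [mixS]
    · filter_upwards [ae_nn hν] with t ht
      exact div_nonneg (sub_nonneg.2 (h.kerS_le hs0.le ht)) (by positivity)
  · intro s hs
    filter_upwards [ae_nn hν] with t ht
    refine ENNReal.ofReal_le_ofReal ?_
    rw [div_le_iff₀ (by positivity)]
    exact kerS_taylor hq hs.le ht
  · filter_upwards [ae_nn hν] with t ht
    refine ENNReal.tendsto_ofReal ?_
    rcases ht.eq_or_lt with rfl | ht
    · simp [kerS]
    · have t1 : Tendsto (fun s : ℝ => t * s) (𝓝[>] 0) (𝓝[>] 0) := by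
        refine tendsto_nhdsGT_of_div ht (tendsto_const_nhds.congr' ?_)
        filter_upwards [self_mem_nhdsWithin] with s hs
        rw [mul_div_cancel_right₀ _ (ne_of_gt hs)]
      refine ((hl.comp t1).mul_const t).congr' ?_
      filter_upwards [self_mem_nhdsWithin] with s hs
      have hs0 : s ≠ 0 := ne_of_gt hs
      simp only [Function.comp]
      rw [kerS, if_neg ht.ne']
      field_simp
      ring

/-- The weighted sup-distance `sup |φ - φ'|/s²` contracts by the factor `E[T]`. -/
lemma mixS_contract (h : LTMean φ m) (h' : LTMean φ' m) (hν : ν (Iio 0) = 0)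
    (hi : Integrable (fun t => t) ν) {d : ℝ}
    (hd : ∀ y, 0 ≤ y → |φ y - φ' y| ≤ d * y ^ 2) {s : ℝ} (hs : 0 ≤ s) :
    |mixS φ ν m s - mixS φ' ν m s| ≤ d * (∫ t, t ∂ν) * s ^ 2 := by
  rw [mixS, mixS, ← integral_sub (h.integrable_kerS hν hs) (h'.integrable_kerS hν hs),
    ← Real.norm_eq_abs, ← integral_const_mul, ← integral_mul_const]
  refine norm_integral_le_of_norm_le ((hi.const_mul d).mul_const _) ?_
  filter_upwards [ae_nn hν] with t ht
  rcases ht.eq_or_lt with rfl | ht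
  · simp [kerS]
  · have h1 := hd (t * s) (by positivity)
    rw [kerS, kerS, if_neg ht.ne', if_neg ht.ne', ← sub_div, norm_div, Real.norm_of_nonneg ht.le,
      div_le_iff₀ ht, Real.norm_eq_abs]
    have e : 1 - φ (t * s) - (1 - φ' (t * s)) = -(φ (t * s) - φ' (t * s)) := by ring
    rw [e, abs_neg]
    nlinarith

end LTMean

/-! ### The function `σ_B` and Lipschitz estimates -/

lemma LTMean_exp : LTMean (fun y => Real.exp (-y)) 1 := by
  have e : LS (Measure.dirac 1) = fun y => Real.exp (-y) := by
    funext y; simp [LS]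
  rw [← e]
  refine LTMean_LS (by simp) (integrable_dirac (by simp)) (by simp)

/-- By Fubini, `σ_B` is the same functional as `σ`, applied to the transform `e^{-y}` of the point
mass at `1` and to the mixing law `F_B`. -/
lemma sigmaB_eq {FB : Measure ℝ} [IsProbabilityMeasure FB] (hB : FB (Iio 0) = 0) {x : ℝ}
    (hx : 0 ≤ x) : sigmaB FB x = mixS (fun y => Real.exp (-y)) FB 1 x := by
  rw [sigmaB, intervalIntegral.integral_of_le hx]
  simp only [LS]
  rw [integral_integral_swap]
  · refine integral_congr_ae ?_
    filter_upwards [ae_nn hB] with b hb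
    rw [← intervalIntegral.integral_of_le hx, kerS]
    split_ifs with h0
    · simp [h0]
    · have : ∀ t ∈ uIcc 0 x, HasDerivAt (fun t => -(Real.exp (-(t * b)) / b))
          (Real.exp (-(t * b))) t := by
        intro t _
        have h1 : HasDerivAt (fun t : ℝ => -(t * b)) (-(1 * b)) t :=
          ((hasDerivAt_id t).mul_const b).neg
        have h2 := (h1.exp.div_const b).fun_neg
        refine h2.congr_deriv ?_
        field_simp
      rw [intervalIntegral.integral_eq_sub_of_hasDerivAt this
        (Continuous.intervalIntegrable (by fun_prop) _ _)]
      rw [zero_mul, neg_zero, Real.exp_zero, mul_comm x b]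
      ring
  · have hm : AEStronglyMeasurable (Function.uncurry fun t b : ℝ => Real.exp (-(t * b)))
        ((volume.restrict (Ioc 0 x)).prod FB) :=
      Continuous.aestronglyMeasurable (by unfold Function.uncurry; fun_prop)
    rw [integrable_prod_iff hm]
    constructor
    · filter_upwards [ae_restrict_mem measurableSet_Ioc] with t ht
      exact integrable_exp_neg hB ht.1.le
    · simp only [Function.uncurry, Real.norm_eq_abs, Real.abs_exp]
      refine Integrable.mono' (integrable_const 1) (measurable_LS FB).aestronglyMeasurable ?_
      filter_upwards [ae_restrict_mem measurableSet_Ioc] with t ht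
      rw [Real.norm_eq_abs]
      change |LS FB t| ≤ 1
      rw [abs_of_nonneg (LS_nonneg FB t)]
      exact LS_le_one hB ht.1.le

lemma sigmaB_nonneg {FB : Measure ℝ} [IsProbabilityMeasure FB] (hB : FB (Iio 0) = 0) {x : ℝ}
    (hx : 0 ≤ x) : 0 ≤ sigmaB FB x := by
  rw [sigmaB_eq hB hx]; exact LTMean_exp.mixS_nonneg hB hx

lemma sigmaB_le {FB : Measure ℝ} [IsProbabilityMeasure FB] (hB : FB (Iio 0) = 0) {x : ℝ}
    (hx : 0 ≤ x) : sigmaB FB x ≤ x := by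
  rw [sigmaB_eq hB hx]; simpa using LTMean_exp.mixS_le hB hx

lemma sigmaB_lip {FB : Measure ℝ} [IsProbabilityMeasure FB] (hB : FB (Iio 0) = 0) {x y : ℝ}
    (hx : 0 ≤ x) (hy : 0 ≤ y) : |sigmaB FB x - sigmaB FB y| ≤ |x - y| := by
  have hi : ∀ z, 0 ≤ z → IntervalIntegrable (LS FB) volume 0 z := fun z hz => by
    refine ContinuousOn.intervalIntegrable ((continuousOn_LS hB).mono ?_)
    rw [uIcc_of_le hz]; exact fun t ht => ht.1
  rw [sigmaB, sigmaB, intervalIntegral.integral_interval_sub_left (hi x hx) (hi y hy)]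
  have := intervalIntegral.norm_integral_le_of_norm_le_const (a := y) (b := x) (f := LS FB)
    (C := 1) fun t ht => ?_
  · simpa using this
  · have ht0 : 0 ≤ t := (le_min hy hx).trans (le_of_lt ht.1)
    rw [Real.norm_eq_abs, abs_of_nonneg (LS_nonneg FB t)]
    exact LS_le_one hB ht0

lemma exp_neg_lip {u v : ℝ} (hu : 0 ≤ u) (hv : 0 ≤ v) :
    |Real.exp (-u) - Real.exp (-v)| ≤ |u - v| := by
  wlog h : u ≤ v generalizing u v
  · rw [abs_sub_comm, abs_sub_comm u v]; exact this hv hu (le_of_not_ge h)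
  have h1 : Real.exp (-v) ≤ Real.exp (-u) := Real.exp_le_exp.2 (by linarith)
  rw [abs_of_nonneg (sub_nonneg.2 h1), abs_of_nonpos (sub_nonpos.2 h)]
  have e : Real.exp (-v) = Real.exp (-u) * Real.exp (-(v - u)) := by
    rw [← Real.exp_add]; ring_nf
  have h2 := Real.add_one_le_exp (-(v - u))
  have h3 : Real.exp (-u) ≤ 1 := Real.exp_le_one_iff.2 (by linarith)
  have h4 := Real.exp_pos (-u)
  rw [e]
  nlinarith [mul_le_mul_of_nonneg_left h2 h4.le]

lemma LS_lip {F : Measure ℝ} [IsProbabilityMeasure F] (h : F (Iio 0) = 0)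
    (hi : Integrable (fun x => x) F) {u v : ℝ} (hu : 0 ≤ u) (hv : 0 ≤ v) :
    |LS F u - LS F v| ≤ |u - v| * ∫ x, x ∂F := by
  rw [LS, LS, ← integral_sub (integrable_exp_neg h hu) (integrable_exp_neg h hv),
    ← integral_const_mul, ← Real.norm_eq_abs]
  refine norm_integral_le_of_norm_le (hi.const_mul _) ?_
  filter_upwards [ae_nn h] with x hx
  refine (exp_neg_lip (mul_nonneg hu hx) (mul_nonneg hv hx)).trans_eq ?_
  rw [← sub_mul, abs_mul, abs_of_nonneg hx]

lemma log_lip {lam u v : ℝ} (hlam : 0 < lam) (hu : 0 ≤ u) (hv : 0 ≤ v) :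
    |Real.log (1 + lam * u) - Real.log (1 + lam * v)| ≤ lam * |u - v| := by
  wlog h : v ≤ u generalizing u v
  · rw [abs_sub_comm, abs_sub_comm u v]; exact this hv hu (le_of_not_ge h)
  have pu : 0 < 1 + lam * u := by positivity
  have pv : 0 < 1 + lam * v := by positivity
  have hl : lam * v ≤ lam * u := mul_le_mul_of_nonneg_left h hlam.le
  rw [abs_of_nonneg (sub_nonneg.2 h), abs_of_nonneg
    (sub_nonneg.2 (Real.log_le_log pv (by linarith))), ← Real.log_div pu.ne' pv.ne']
  refine (Real.log_le_sub_one_of_pos (by positivity)).trans ?_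
  have : (1 + lam * u) / (1 + lam * v) - 1 = (lam * (u - v)) / (1 + lam * v) := by
    field_simp; ring
  rw [this, div_le_iff₀ pv]
  have : 0 ≤ lam * (u - v) := by linarith
  have : 0 ≤ lam * v := by positivity
  nlinarith

/-- The outer part `x ↦ ∫ (1 + λ σ_B(x))^{-a} dF_A(a)` of the functional equation. -/
noncomputable def outer (FA FB : Measure ℝ) (lam x : ℝ) : ℝ :=
  ∫ a, (1 + lam * sigmaB FB x) ^ (-a) ∂FA

section outer

variable {FA FB : Measure ℝ} [IsProbabilityMeasure FA] [IsProbabilityMeasure FB] {lam : ℝ}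

omit [IsProbabilityMeasure FA] in
lemma outer_eq (hB : FB (Iio 0) = 0) (hlam : 0 < lam) {x : ℝ} (hx : 0 ≤ x) :
    outer FA FB lam x = LS FA (Real.log (1 + lam * sigmaB FB x)) := by
  have := sigmaB_nonneg hB hx
  rw [outer, LS]
  refine integral_congr_ae (ae_of_all _ fun a => ?_)
  beta_reduce
  rw [Real.rpow_def_of_pos (by positivity), mul_neg]

/-- The normalisation `E[A] = 1/λ` makes the outer function nonexpansive. -/
lemma outer_lip (hA : FA (Iio 0) = 0) (hB : FB (Iio 0) = 0) (hlam : 0 < lam)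
    (hi : Integrable (fun a => a) FA) (hm : ∫ a, a ∂FA = 1 / lam) {x y : ℝ} (hx : 0 ≤ x)
    (hy : 0 ≤ y) : |outer FA FB lam x - outer FA FB lam y| ≤ |x - y| := by
  have h1 := sigmaB_nonneg hB hx
  have h2 := sigmaB_nonneg hB hy
  rw [outer_eq hB hlam hx, outer_eq hB hlam hy]
  refine (LS_lip hA hi (Real.log_nonneg (by nlinarith)) (Real.log_nonneg (by nlinarith))).trans ?_
  rw [hm, mul_one_div, div_le_iff₀ hlam, mul_comm |x - y|]
  exact (log_lip hlam h1 h2).trans (mul_le_mul_of_nonneg_left (sigmaB_lip hB hx hy) hlam.le)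

end outer

lemma log_one_add_div_tendsto :
    Tendsto (fun x : ℝ => Real.log (1 + x) / x) (𝓝[>] 0) (𝓝 1) := by
  have h1 : Tendsto (fun s : ℝ => s) (𝓝[>] 0) (𝓝 0) :=
    tendsto_nhdsWithin_of_tendsto_nhds tendsto_id
  have h2 := (log_taylor_tendsto.mul h1).const_sub 1
  rw [mul_zero, sub_zero] at h2
  refine h2.congr' ?_
  filter_upwards [self_mem_nhdsWithin] with x hx
  have : x ≠ 0 := ne_of_gt hx
  field_simp
  ring

/-! ### Fixed-point iteration -/

section step

variable {FT FA FB : Measure ℝ} [IsProbabilityMeasure FT] [IsProbabilityMeasure FA]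
  [IsProbabilityMeasure FB] {μ lam : ℝ}

omit [IsProbabilityMeasure FA] in
/-- Expansion of the right-hand side of the functional equation around `1 - μ s`, as a sum of
four nonnegative remainders of order `s ^ 2`: from `F_A`, the logarithm, `F_B` and `F_T`. -/
lemma outer_expand (hB : FB (Iio 0) = 0) (hlam : 0 < lam) {x : ℝ} (hx : 0 ≤ x) (s : ℝ) :
    outer FA FB lam x - 1 + μ * s =
      (LS FA (Real.log (1 + lam * sigmaB FB x)) - 1
        + 1 / lam * Real.log (1 + lam * sigmaB FB x))
      + 1 / lam * (lam * sigmaB FB x - Real.log (1 + lam * sigmaB FB x))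
      + (1 * x - mixS (fun y => Real.exp (-y)) FB 1 x) + (μ * s - x) := by
  rw [outer_eq hB hlam hx, ← sigmaB_eq hB hx]
  field_simp
  ring

/-- Distributions on `[0, ∞)` with mean `μ` and second moment at most `2 M`, expressed through
their transforms so that the class is visibly closed under limits. -/
structure InC (μ M : ℝ) (F : Measure ℝ) : Prop where
  prob : IsProbabilityMeasure F
  supp : F (Iio 0) = 0
  lower : ∀ s, 0 ≤ s → 0 ≤ LS F s - 1 + μ * s
  upper : ∀ s, 0 ≤ s → LS F s - 1 + μ * s ≤ M * s ^ 2

lemma InC.ltMean {M : ℝ} {F : Measure ℝ} (hμ : 0 < μ) (h : InC μ M F) : LTMean (LS F) μ := by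
  have := h.prob
  obtain ⟨h1, h2, _⟩ := moments_of_taylor h.supp hμ.le h.lower h.upper
  exact LTMean_LS h.supp h1 h2

lemma InC.sub_le {M : ℝ} {F G : Measure ℝ} (hF : InC μ M F) (hG : InC μ M G) {s : ℝ}
    (hs : 0 ≤ s) : |LS F s - LS G s| ≤ M * s ^ 2 := by
  have h1 := hF.lower s hs
  have h2 := hF.upper s hs
  have h3 := hG.lower s hs
  have h4 := hG.upper s hs
  rw [abs_le]; constructor <;> linarith

lemma inC_dirac (hμ : 0 < μ) {M : ℝ} (hM : μ ^ 2 / 2 ≤ M) : InC μ M (Measure.dirac μ) := by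
  have e : ∀ s, LS (Measure.dirac μ) s = Real.exp (-(s * μ)) := fun s => by simp [LS]
  refine ⟨inferInstance, by simp [hμ.le], fun s hs => ?_, fun s hs => ?_⟩
  · rw [e, mul_comm μ]; exact exp_neg_taylor_nonneg _
  · rw [e, mul_comm μ]
    refine (exp_neg_taylor_le (mul_nonneg hs hμ.le)).trans ?_
    nlinarith [sq_nonneg s]

/-- The map `F ↦` right-hand side of the functional equation takes values in transforms of
distributions, by subordination. -/
lemma exists_step (hT : FT (Iio 0) = 0) (hA : FA (Iio 0) = 0) (hB : FB (Iio 0) = 0)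
    (hlam : 0 < lam) {F : Measure ℝ} (hF : LTMean (LS F) μ) :
    IsLT fun s => outer FA FB lam (mixS (LS F) FT μ s) := by
  have b1 : IsBern fun s => mixS (LS F) FT μ s :=
    hF.isBern hT IsBern.id.nonneg IsBern.id.tendsto_zero fun t ht => hF.isLT.scale ht
  have b2 : IsBern fun s => mixS (fun y => Real.exp (-y)) FB 1 (mixS (LS F) FT μ s) :=
    LTMean_exp.isBern hB b1.nonneg b1.tendsto_zero b1.isLT
  refine (b2.power_mixture hlam FA hA).congr fun s hs => ?_
  rw [outer, sigmaB_eq hB (b1.nonneg s hs)]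

/-- The self-mapping property on the class with second-moment bound `2 M`. -/
lemma InC.step (hT : FT (Iio 0) = 0) (hA : FA (Iio 0) = 0) (hB : FB (Iio 0) = 0)
    (hμ : 0 < μ) (hlam : 0 < lam)
    (iT : Integrable (fun t => t) FT) (iA : Integrable (fun a => a) FA)
    (mA : ∫ a, a ∂FA = 1 / lam) (iA2 : Integrable (fun a => a ^ 2) FA)
    (iB : Integrable (fun b => b) FB) {M : ℝ}
    (hM : (1 / 2 * ∫ a, a ^ 2 ∂FA) * (lam * μ) ^ 2 + 1 / 2 * lam * μ ^ 2
      + 1 / 2 * (∫ b, b ∂FB) * μ ^ 2 + M * (∫ t, t ∂FT) ≤ M)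
    {F : Measure ℝ} (hF : InC μ M F) :
    ∃ G, InC μ M G ∧ ∀ s, 0 ≤ s → LS G s = outer FA FB lam (mixS (LS F) FT μ s) := by
  have hL := hF.ltMean hμ
  obtain ⟨G, hG, hG0, hGe⟩ := exists_step hT hA hB hlam hL
  have a2 : 0 ≤ ∫ a, a ^ 2 ∂FA := integral_nonneg fun a => sq_nonneg a
  have b1 : 0 ≤ ∫ b, b ∂FB := integral_nonneg_of_ae (ae_nn hB)
  refine ⟨G, ⟨hG, hG0, fun s hs => ?_, fun s hs => ?_⟩, fun s hs => (hGe s hs).symm⟩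
  all_goals
    rw [← hGe s hs]
    have x0 := hL.mixS_nonneg hT hs
    have xle := hL.mixS_le hT hs
    have x2 := LTMean.mixS_taylor_le hL hT hF.upper iT hs
    set x := mixS (LS F) FT μ s
    have v0 := sigmaB_nonneg hB x0
    have vle := sigmaB_le hB x0
    have hlv : 0 ≤ lam * sigmaB FB x := by positivity
    have u0 : 0 ≤ Real.log (1 + lam * sigmaB FB x) := Real.log_nonneg (by linarith)
    have l1 := log_taylor_nonneg hlv
    have t1 := taylor_LS_nonneg hA iA mA u0
    have s1 := LTMean_exp.mixS_le hB x0
    rw [outer_expand hB hlam x0]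
  · have := mul_nonneg (one_div_pos.2 hlam).le l1
    linarith
  · have x2s : x ^ 2 ≤ (μ * s) ^ 2 := pow_le_pow_left₀ x0 xle 2
    have lv : (lam * sigmaB FB x) ^ 2 ≤ (lam * (μ * s)) ^ 2 :=
      pow_le_pow_left₀ hlv (mul_le_mul_of_nonneg_left (vle.trans xle) hlam.le) 2
    have lu : Real.log (1 + lam * sigmaB FB x) ^ 2 ≤ (lam * (μ * s)) ^ 2 :=
      (pow_le_pow_left₀ u0 (sub_nonneg.1 l1) 2).trans lv
    have q1 := (taylor_LS_le hA iA iA2 mA u0).trans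
      (mul_le_mul_of_nonneg_left lu (by positivity))
    have q2 := mul_le_mul_of_nonneg_left ((log_taylor_le hlv).trans
      (mul_le_mul_of_nonneg_left lv (by positivity))) (one_div_pos.2 hlam).le
    have e2 : 1 / lam * (1 / 2 * (lam * (μ * s)) ^ 2) = 1 / 2 * lam * μ ^ 2 * s ^ 2 := by
      field_simp
    have q3 := (LTMean.mixS_taylor_le (q := 1 / 2) LTMean_exp hB
      (fun y hy => by simpa using exp_neg_taylor_le hy) iB x0).trans
      (mul_le_mul_of_nonneg_left x2s (by positivity))
    have q5 := mul_le_mul_of_nonneg_right hM (sq_nonneg s)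
    rw [e2] at q2
    nlinarith

/-- The functional equation contracts the metric `sup |φ - φ'|/s²` by the factor `E[T]`. -/
lemma outer_contract (hT : FT (Iio 0) = 0) (hA : FA (Iio 0) = 0) (hB : FB (Iio 0) = 0)
    (hlam : 0 < lam) (iT : Integrable (fun t => t) FT) (iA : Integrable (fun a => a) FA)
    (mA : ∫ a, a ∂FA = 1 / lam) {F G : Measure ℝ} (hF : LTMean (LS F) μ)
    (hG : LTMean (LS G) μ) {d : ℝ} (hd : ∀ y, 0 ≤ y → |LS F y - LS G y| ≤ d * y ^ 2) {s : ℝ}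
    (hs : 0 ≤ s) :
    |outer FA FB lam (mixS (LS F) FT μ s) - outer FA FB lam (mixS (LS G) FT μ s)|
      ≤ d * (∫ t, t ∂FT) * s ^ 2 :=
  (outer_lip hA hB hlam iA mA (hF.mixS_nonneg hT hs) (hG.mixS_nonneg hT hs)).trans
    (LTMean.mixS_contract hF hG hT iT hd hs)

end step

section forward

variable {FT FA FB : Measure ℝ} [IsProbabilityMeasure FT] [IsProbabilityMeasure FA]
  [IsProbabilityMeasure FB] {μ lam : ℝ}

omit [IsProbabilityMeasure FT] [IsProbabilityMeasure FA] [IsProbabilityMeasure FB] in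
lemma Sol.exists_inC {F : Measure ℝ} (hμ : 0 < μ) (h : Sol FT FA FB μ lam F) :
    ∃ M, 0 ≤ M ∧ InC μ M F := by
  obtain ⟨hp, h0, hm, h2, _⟩ := h
  have hi : Integrable (fun x => x) F := by
    by_contra hc
    rw [integral_undef hc] at hm
    exact hμ.ne hm
  have p : 0 ≤ ∫ x, x ^ 2 ∂F := integral_nonneg fun x => sq_nonneg x
  refine ⟨1 / 2 * ∫ x, x ^ 2 ∂F, by positivity, hp, h0, fun s hs => ?_, fun s hs => ?_⟩
  · exact taylor_LS_nonneg h0 hi hm hs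
  · exact taylor_LS_le h0 hi h2 hm hs

lemma Sol.unique (hT : FT (Iio 0) = 0) (hA : FA (Iio 0) = 0) (hB : FB (Iio 0) = 0)
    (hμ : 0 < μ) (hlam : 0 < lam)
    (iT : Integrable (fun t => t) FT) (hT1 : ∫ t, t ∂FT < 1) (iA : Integrable (fun a => a) FA)
    (mA : ∫ a, a ∂FA = 1 / lam) {F G : Measure ℝ} (hF : Sol FT FA FB μ lam F)
    (hG : Sol FT FA FB μ lam G) : F = G := by
  obtain ⟨M, hM, cF⟩ := hF.exists_inC hμ
  obtain ⟨M', hM', cG⟩ := hG.exists_inC hμ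
  have := cF.prob
  have := cG.prob
  have hT0 : 0 ≤ ∫ t, t ∂FT := integral_nonneg_of_ae (ae_nn hT)
  have key : ∀ n : ℕ, ∀ s, 0 ≤ s →
      |LS F s - LS G s| ≤ ((M + M') * (∫ t, t ∂FT) ^ n) * s ^ 2 := by
    intro n
    induction n with
    | zero =>
      intro s hs
      have h1 := cF.lower s hs
      have h2 := cF.upper s hs
      have h3 := cG.lower s hs
      have h4 := cG.upper s hs
      have h5 := mul_nonneg hM (sq_nonneg s)
      have h6 := mul_nonneg hM' (sq_nonneg s)
      rw [pow_zero, mul_one, abs_le]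
      constructor <;> linarith
    | succ n ih =>
      intro s hs
      have := outer_contract hT hA hB hlam iT iA mA (cF.ltMean hμ) (cG.ltMean hμ) ih hs
      rw [hF.2.2.2.2 s hs, hG.2.2.2.2 s hs, pow_succ, ← mul_assoc (M + M')]
      exact this
  refine LS_injective cF.supp cG.supp fun s hs => ?_
  have l : Tendsto (fun n : ℕ => ((M + M') * (∫ t, t ∂FT) ^ n) * s ^ 2) atTop (𝓝 0) := by
    have := ((tendsto_pow_atTop_nhds_zero_of_lt_one hT0 hT1).const_mul (M + M')).mul_const (s ^ 2)
    simpa using this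
  have := ge_of_tendsto' l fun n => key n s hs
  exact sub_eq_zero.1 (abs_nonpos_iff.1 this)

lemma Sol.exists (hT : FT (Iio 0) = 0) (hA : FA (Iio 0) = 0) (hB : FB (Iio 0) = 0)
    (hμ : 0 < μ) (hlam : 0 < lam)
    (iT : Integrable (fun t => t) FT) (hT1 : ∫ t, t ∂FT < 1) (iA : Integrable (fun a => a) FA)
    (mA : ∫ a, a ∂FA = 1 / lam) (iA2 : Integrable (fun a => a ^ 2) FA)
    (iB : Integrable (fun b => b) FB) : ∃ F, Sol FT FA FB μ lam F := by
  have hT0 : 0 ≤ ∫ t, t ∂FT := integral_nonneg_of_ae (ae_nn hT)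
  set r := ∫ t, t ∂FT with hr
  have hr1 : 0 < 1 - r := sub_pos.2 hT1
  set K := (1 / 2 * ∫ a, a ^ 2 ∂FA) * (lam * μ) ^ 2 + 1 / 2 * lam * μ ^ 2
      + 1 / 2 * (∫ b, b ∂FB) * μ ^ 2 with hK
  have hK0 : 0 ≤ K := by
    have a2 : 0 ≤ ∫ a, a ^ 2 ∂FA := integral_nonneg fun a => sq_nonneg a
    have b1 : 0 ≤ ∫ b, b ∂FB := integral_nonneg_of_ae (ae_nn hB)
    positivity
  obtain ⟨M, hMd⟩ : ∃ M, M = K / (1 - r) + μ ^ 2 / 2 := ⟨_, rfl⟩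
  have hKM : K + M * r ≤ M := by
    have : K ≤ M * (1 - r) := by
      rw [← div_le_iff₀ hr1, hMd]; linarith [sq_nonneg μ]
    linarith
  have hMμ : μ ^ 2 / 2 ≤ M := by
    have : 0 ≤ K / (1 - r) := by positivity
    linarith
  have hM0 : 0 ≤ M := le_trans (by positivity) hMμ
  choose! g hg1 hg2 using fun (F : Measure ℝ) (hF : InC μ M F) =>
    InC.step hT hA hB hμ hlam iT iA mA iA2 iB hKM hF
  let f : ℕ → Measure ℝ := fun n => g^[n] (Measure.dirac μ)
  have fsucc : ∀ n, f (n + 1) = g (f n) := fun n => Function.iterate_succ_apply' g n _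
  have fC : ∀ n, InC μ M (f n) := by
    intro n
    induction n with
    | zero => exact inC_dirac hμ hMμ
    | succ n ih => rw [fsucc]; exact hg1 _ ih
  have feq : ∀ n s, 0 ≤ s → LS (f (n + 1)) s = outer FA FB lam (mixS (LS (f n)) FT μ s) := by
    intro n s hs
    rw [fsucc]; exact hg2 _ (fC n) s hs
  have fd : ∀ n : ℕ, ∀ s, 0 ≤ s → |LS (f n) s - LS (f (n + 1)) s| ≤ (M * r ^ n) * s ^ 2 := by
    intro n
    induction n with
    | zero =>
      intro s hs
      rw [pow_zero, mul_one]
      exact (fC 0).sub_le (fC 1) hs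
    | succ n ih =>
      intro s hs
      have := outer_contract hT hA hB hlam iT iA mA ((fC n).ltMean hμ)
        ((fC (n + 1)).ltMean hμ) ih hs
      rw [feq n s hs, feq (n + 1) s hs, pow_succ, ← mul_assoc M]
      exact this
  have fdist : ∀ s, 0 ≤ s → ∀ n, dist (LS (f n) s) (LS (f (n + 1)) s) ≤ (M * s ^ 2) * r ^ n := by
    intro s hs n
    rw [Real.dist_eq]
    exact (fd n s hs).trans_eq (by ring)
  have hex : ∀ s, ∃ y, 0 ≤ s → Tendsto (fun n => LS (f n) s) atTop (𝓝 y) := by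
    intro s
    by_cases hs : 0 ≤ s
    · obtain ⟨y, hy⟩ := cauchySeq_tendsto_of_complete
        (cauchySeq_of_le_geometric r _ hT1 (fdist s hs))
      exact ⟨y, fun _ => hy⟩
    · exact ⟨0, fun h => absurd h hs⟩
  choose φ hφ using hex
  have low : ∀ s, 0 ≤ s → 0 ≤ φ s - 1 + μ * s := fun s hs =>
    ge_of_tendsto' (((hφ s hs).sub_const 1).add_const (μ * s)) fun n => (fC n).lower s hs
  have up : ∀ s, 0 ≤ s → φ s - 1 + μ * s ≤ M * s ^ 2 := fun s hs =>
    le_of_tendsto' (((hφ s hs).sub_const 1).add_const (μ * s)) fun n => (fC n).upper s hs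
  have φ0 : Tendsto φ (𝓝[>] 0) (𝓝 1) := by
    have c1 : Tendsto (fun s : ℝ => 1 - μ * s) (𝓝[>] 0) (𝓝 1) := by
      have : Tendsto (fun s : ℝ => 1 - μ * s) (𝓝 0) (𝓝 (1 - μ * 0)) :=
        Continuous.tendsto (by fun_prop) 0
      rw [mul_zero, sub_zero] at this
      exact this.mono_left nhdsWithin_le_nhds
    have c2 : Tendsto (fun s : ℝ => 1 - μ * s + M * s ^ 2) (𝓝[>] 0) (𝓝 1) := by
      have : Tendsto (fun s : ℝ => 1 - μ * s + M * s ^ 2) (𝓝 0) (𝓝 (1 - μ * 0 + M * 0 ^ 2)) :=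
        Continuous.tendsto (by fun_prop) 0
      simp only [mul_zero, sub_zero, ne_eq, OfNat.ofNat_ne_zero, not_false_eq_true, zero_pow,
        add_zero] at this
      exact this.mono_left nhdsWithin_le_nhds
    refine tendsto_of_tendsto_of_tendsto_of_le_of_le' c1 c2 ?_ ?_
    · filter_upwards [self_mem_nhdsWithin] with s hs
      linarith [low s (le_of_lt hs)]
    · filter_upwards [self_mem_nhdsWithin] with s hs
      linarith [up s (le_of_lt hs)]
  obtain ⟨F, hF, hF0, hFe⟩ : IsLT φ :=
    IsLT.lim (fun n => ⟨f n, (fC n).prob, (fC n).supp, fun _ _ => rfl⟩) hφ φ0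
  have hC : InC μ M F := ⟨hF, hF0, fun s hs => by rw [← hFe s hs]; exact low s hs,
    fun s hs => by rw [← hFe s hs]; exact up s hs⟩
  obtain ⟨_, m1, m2⟩ := moments_of_taylor hF0 hμ.le hC.lower hC.upper
  refine ⟨F, hF, hF0, m1, m2, fun s hs => ?_⟩
  change LS F s = outer FA FB lam (mixS (LS F) FT μ s)
  have hn : ∀ n : ℕ, ∀ y, 0 ≤ y → |LS (f n) y - LS F y| ≤ (M * r ^ n / (1 - r)) * y ^ 2 := by
    intro n y hy
    have := dist_le_of_le_geometric_of_tendsto r _ hT1 (fdist y hy) (hφ y hy) n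
    rw [Real.dist_eq, hFe y hy] at this
    exact this.trans_eq (by ring)
  have l1 : Tendsto (fun n => LS (f (n + 1)) s) atTop (𝓝 (LS F s)) := by
    rw [← hFe s hs]; exact (hφ s hs).comp (tendsto_add_atTop_nat 1)
  have l2 : Tendsto (fun n => LS (f (n + 1)) s) atTop
      (𝓝 (outer FA FB lam (mixS (LS F) FT μ s))) := by
    rw [tendsto_iff_norm_sub_tendsto_zero]
    have l3 : Tendsto (fun n : ℕ => (M * r ^ n / (1 - r)) * r * s ^ 2) atTop (𝓝 0) := by
      have := ((((tendsto_pow_atTop_nhds_zero_of_lt_one hT0 hT1).const_mul M).div_const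
        (1 - r)).mul_const r).mul_const (s ^ 2)
      simpa using this
    refine squeeze_zero (fun _ => norm_nonneg _) (fun n => ?_) l3
    rw [feq n s hs, Real.norm_eq_abs]
    exact outer_contract hT hA hB hlam iT iA mA ((fC n).ltMean hμ) (hC.ltMean hμ) (hn n) hs
  exact tendsto_nhds_unique l1 l2

end forward

/-! ### Moment identities for a solution -/

section backward

variable {FT FA FB : Measure ℝ} [IsProbabilityMeasure FT] [IsProbabilityMeasure FA]
  [IsProbabilityMeasure FB] {μ lam : ℝ}

/-- First- and second-order expansion of the functional equation at `s = 0`. The limits are taken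
in `[0, ∞]`, so no moment of `T`, `A`, `B` is assumed finite. -/
lemma Sol.analysis (hT : FT (Iio 0) = 0) (hA : FA (Iio 0) = 0) (hB : FB (Iio 0) = 0)
    (hμ : 0 < μ) (hlam : 0 < lam) {F : Measure ℝ} (hF : Sol FT FA FB μ lam F) :
    Integrable (fun a => a) FA ∧ ∫ a, a ∂FA = 1 / lam ∧ Integrable (fun a => a ^ 2) FA ∧
    Integrable (fun b => b) FB ∧ Integrable (fun t => t) FT ∧
    (∫ x, x ^ 2 ∂F) * (1 - ∫ t, t ∂FT)
      = (lam ^ 2 * (∫ a, a ^ 2 ∂FA) + lam + ∫ b, b ∂FB) * μ ^ 2 := by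
  obtain ⟨M, hM, hC⟩ := hF.exists_inC hμ
  obtain ⟨hp, h0, hm, hi2, heq⟩ := hF
  have hi : Integrable (fun x => x) F := by
    by_contra hc
    rw [integral_undef hc] at hm
    exact hμ.ne hm
  have hL : LTMean (LS F) μ := LTMean_LS h0 hi hm
  set x : ℝ → ℝ := fun s => mixS (LS F) FT μ s with hx
  set v : ℝ → ℝ := fun s => sigmaB FB (x s) with hv
  set u : ℝ → ℝ := fun s => Real.log (1 + lam * v s) with hu
  have x0 : ∀ s, 0 ≤ s → 0 ≤ x s := fun s hs => hL.mixS_nonneg hT hs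
  have v0 : ∀ s, 0 ≤ s → 0 ≤ v s := fun s hs => sigmaB_nonneg hB (x0 s hs)
  have e1 : ∀ s, 0 ≤ s → LS F s = outer FA FB lam (x s) := fun s hs => heq s hs
  have e2 : ∀ s, 0 ≤ s → LS F s = LS FA (u s) := fun s hs => by
    rw [e1 s hs, outer_eq hB hlam (x0 s hs)]
  -- first-order asymptotics of the nested arguments
  have lx : Tendsto (fun s => x s / s) (𝓝[>] 0) (𝓝 μ) := hL.mixS_div_tendsto hT
  have tx := tendsto_nhdsGT_of_div hμ lx
  have lv : Tendsto (fun s => v s / s) (𝓝[>] 0) (𝓝 μ) := by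
    have h := ((LTMean_exp.mixS_div_tendsto hB).comp tx).mul lx
    rw [one_mul] at h
    refine h.congr' ?_
    filter_upwards [self_mem_nhdsWithin, tx self_mem_nhdsWithin] with s hs hxs
    have hs0 : (0 : ℝ) < s := hs
    have hx0 : (0 : ℝ) < x s := hxs
    simp only [Function.comp, hv]
    rw [sigmaB_eq hB hx0.le, div_mul_div_cancel₀ hx0.ne']
  have llv : Tendsto (fun s => lam * v s / s) (𝓝[>] 0) (𝓝 (lam * μ)) := by
    refine (lv.const_mul lam).congr fun s => ?_
    rw [mul_div_assoc]
  have hlμ : 0 < lam * μ := mul_pos hlam hμ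
  have tlv := tendsto_nhdsGT_of_div hlμ llv
  have lu : Tendsto (fun s => u s / s) (𝓝[>] 0) (𝓝 (lam * μ)) := by
    have h := (log_one_add_div_tendsto.comp tlv).mul llv
    rw [one_mul] at h
    refine h.congr' ?_
    filter_upwards [tlv self_mem_nhdsWithin] with s hs
    have hs0 : (0 : ℝ) < lam * v s := hs
    simp only [Function.comp, hu]
    rw [div_mul_div_cancel₀ hs0.ne']
  have tu := tendsto_nhdsGT_of_div hlμ lu
  -- comparing coefficients of `s` gives `μ = E[A] λ μ` in `[0, ∞]`
  have fA : ∫⁻ a, ENNReal.ofReal a ∂FA = ENNReal.ofReal (1 / lam) := by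
    have k1 := ENNReal.Tendsto.mul ((mean_lim hA).comp tu)
      (Or.inr ENNReal.ofReal_ne_top) (ENNReal.tendsto_ofReal lu)
      (Or.inl (ENNReal.ofReal_pos.2 hlμ).ne')
    have k2 := ENNReal.tendsto_ofReal hL.lim
    have k3 := tendsto_nhds_unique_of_eventuallyEq k1 k2 (by
      filter_upwards [self_mem_nhdsWithin, tu self_mem_nhdsWithin] with s hs hus
      have hs0 : (0 : ℝ) < s := hs
      have hu0 : (0 : ℝ) < u s := hus
      simp only [Function.comp]
      rw [← ENNReal.ofReal_mul (div_nonneg (sub_nonneg.2 (LS_le_one hA hu0.le)) hu0.le),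
        div_mul_div_cancel₀ hu0.ne', e2 s hs0.le])
    rw [mul_comm] at k3
    rw [(ENNReal.eq_div_iff (ENNReal.ofReal_pos.2 hlμ).ne' ENNReal.ofReal_ne_top).2 k3,
      ← ENNReal.ofReal_div_of_pos hlμ]
    congr 1
    field_simp
  have iA : Integrable (fun a => a) FA :=
    integrable_id_of_lintegral hA (by rw [fA]; exact ENNReal.ofReal_ne_top)
  have mA : ∫ a, a ∂FA = 1 / lam := by
    rw [integral_id_eq hA, fA, ENNReal.toReal_ofReal (by positivity)]
  -- comparing coefficients of `s ^ 2`: `q` is the left-hand side, `q1`, ..., `q4` the remainders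
  have q := second_lim h0 hi hm
  have qF : ∫⁻ x, ENNReal.ofReal (1 / 2 * x ^ 2) ∂F
      = ENNReal.ofReal (1 / 2 * ∫ x, x ^ 2 ∂F) := by
    rw [← integral_const_mul, ofReal_integral_eq_lintegral_ofReal (hi2.const_mul _)
      (ae_of_all _ fun x => by positivity)]
  set m2 := ∫ x, x ^ 2 ∂F with hm2
  have m20 : 0 ≤ m2 := integral_nonneg fun x => sq_nonneg x
  rw [qF] at q
  have qr : Tendsto (fun s => (LS F s - 1 + μ * s) / s ^ 2) (𝓝[>] 0) (𝓝 (1 / 2 * m2)) := by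
    have h2 := (ENNReal.tendsto_toReal ENNReal.ofReal_ne_top).comp q
    rw [ENNReal.toReal_ofReal (by positivity)] at h2
    refine h2.congr' ?_
    filter_upwards [self_mem_nhdsWithin] with s hs
    exact ENNReal.toReal_ofReal (div_nonneg (hC.lower s (le_of_lt hs)) (sq_nonneg s))
  have q1 := ENNReal.Tendsto.mul ((second_lim hA iA mA).comp tu)
      (Or.inr ENNReal.ofReal_ne_top) (ENNReal.tendsto_ofReal (lu.pow 2))
      (Or.inl (ENNReal.ofReal_pos.2 (by positivity)).ne')
  have q2 := ENNReal.tendsto_ofReal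
    (((log_taylor_tendsto.comp tlv).mul (llv.pow 2)).const_mul (1 / lam))
  have q3 := ENNReal.Tendsto.mul ((LTMean.mixS_taylor_tendsto (q := 1 / 2) LTMean_exp hB
      (fun y hy => by simpa using exp_neg_taylor_le hy)
      (by simpa using exp_neg_taylor_tendsto)).comp tx)
      (Or.inr ENNReal.ofReal_ne_top) (ENNReal.tendsto_ofReal (lx.pow 2))
      (Or.inl (ENNReal.ofReal_pos.2 (by positivity)).ne')
  have q4 := LTMean.mixS_taylor_tendsto hL hT
    (fun y hy => taylor_LS_le h0 hi hi2 hm hy) qr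
  have main := tendsto_nhds_unique_of_eventuallyEq q (((q1.add q2).add q3).add q4) (by
    filter_upwards [self_mem_nhdsWithin, tx self_mem_nhdsWithin, tlv self_mem_nhdsWithin,
      tu self_mem_nhdsWithin] with s hs hxs hvs hus
    have hs0 : (0 : ℝ) < s := hs
    have hx0 : (0 : ℝ) < x s := hxs
    have hv0 : (0 : ℝ) < lam * v s := hvs
    have hu0 : (0 : ℝ) < u s := hus
    have p1 := taylor_LS_nonneg hA iA mA hu0.le
    have p2 := log_taylor_nonneg hv0.le
    have p3 := LTMean_exp.mixS_le hB hx0.le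
    have p4 := hL.mixS_le hT hs0.le
    have p3' := sub_nonneg.2 p3
    have p4' := sub_nonneg.2 p4
    simp only [Function.comp]
    rw [← ENNReal.ofReal_mul (by positivity), ← ENNReal.ofReal_mul (by positivity),
      ← ENNReal.ofReal_add (by positivity) (by positivity),
      ← ENNReal.ofReal_add (by positivity) (by positivity),
      ← ENNReal.ofReal_add (by positivity) (by positivity)]
    congr 1
    rw [e1 s hs0.le, outer_expand hB hlam hx0.le s]
    change (LS FA (u s) - 1 + 1 / lam * u s + 1 / lam * (lam * v s - u s)
      + (1 * x s - mixS (fun y => Real.exp (-y)) FB 1 (x s)) + (μ * s - x s)) / s ^ 2 =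
      (LS FA (u s) - 1 + 1 / lam * u s) / u s ^ 2 * (u s / s) ^ 2
        + 1 / lam * ((lam * v s - u s) / (lam * v s) ^ 2 * (lam * v s / s) ^ 2)
        + (1 * x s - mixS (fun y => Real.exp (-y)) FB 1 (x s)) / x s ^ 2 * (x s / s) ^ 2
        + (μ * s - x s) / s ^ 2
    have can : ∀ a b c : ℝ, b ≠ 0 → a / b ^ 2 * (b / c) ^ 2 = a / c ^ 2 := by
      intro a b c hb
      rw [div_pow, div_mul_div_cancel₀ (pow_ne_zero 2 hb)]
    rw [can _ _ _ hu0.ne', can _ _ _ hv0.ne', can _ _ _ hx0.ne']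
    ring)
  have fin : ENNReal.ofReal (1 / 2 * m2) ≠ ⊤ := ENNReal.ofReal_ne_top
  rw [main] at fin
  simp only [ENNReal.add_ne_top] at fin
  obtain ⟨⟨⟨f1, -⟩, f3⟩, f4⟩ := fin
  have pos1 : 0 < (lam * μ) ^ 2 := by positivity
  have pos3 : 0 < μ ^ 2 := by positivity
  have g1 := ENNReal.lt_top_of_mul_ne_top_left f1 (ENNReal.ofReal_pos.2 pos1).ne'
  have g3 := ENNReal.lt_top_of_mul_ne_top_left f3 (ENNReal.ofReal_pos.2 pos3).ne'
  have cst : ∀ {ν : Measure ℝ} {c : ℝ} {h : ℝ → ℝ}, Measurable h → 0 < c →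
      (∀ᵐ y ∂ν, 0 ≤ h y) → ∫⁻ y, ENNReal.ofReal (c * h y) ∂ν < ⊤ →
      Integrable h ν ∧ ∫⁻ y, ENNReal.ofReal (c * h y) ∂ν = ENNReal.ofReal (c * ∫ y, h y ∂ν) := by
    intro ν c h hmeas hc hpos hfin
    have hpos' : ∀ᵐ y ∂ν, 0 ≤ c * h y := by
      filter_upwards [hpos] with y hy using mul_nonneg hc.le hy
    have i1 : Integrable (fun y => c * h y) ν := by
      refine ⟨(hmeas.const_mul c).aestronglyMeasurable, ?_⟩
      rwa [hasFiniteIntegral_iff_ofReal hpos']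
    refine ⟨?_, ?_⟩
    · refine (i1.const_mul c⁻¹).congr (ae_of_all _ fun y => ?_)
      exact inv_mul_cancel_left₀ hc.ne' _
    · rw [← ofReal_integral_eq_lintegral_ofReal i1 hpos', integral_const_mul]
  obtain ⟨iA2, lA2⟩ := cst (h := fun a => a ^ 2) (by fun_prop) (by norm_num : (0 : ℝ) < 1 / 2)
    (ae_of_all _ fun a => sq_nonneg a) g1
  obtain ⟨iB, lB⟩ := cst (h := fun b => b) (by fun_prop) (by norm_num : (0 : ℝ) < 1 / 2)
    (ae_nn hB) g3
  -- the logarithmic term alone forces `m2 > 0`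
  have m2pos : 0 < 1 / 2 * m2 := by
    rw [← ENNReal.ofReal_pos, main]
    refine lt_of_lt_of_le (ENNReal.ofReal_pos.2
      (by positivity : 0 < 1 / lam * (1 / 2 * (lam * μ) ^ 2))) ?_
    rw [add_assoc, add_assoc]
    exact le_add_left le_self_add
  obtain ⟨iT, lT⟩ := cst (h := fun t => t) (by fun_prop) m2pos (ae_nn hT) f4.lt_top
  refine ⟨iA, mA, iA2, iB, iT, ?_⟩
  have a20 : 0 ≤ ∫ a, a ^ 2 ∂FA := integral_nonneg fun a => sq_nonneg a
  have b0 : 0 ≤ ∫ b, b ∂FB := integral_nonneg_of_ae (ae_nn hB)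
  have t0 : 0 ≤ ∫ t, t ∂FT := integral_nonneg_of_ae (ae_nn hT)
  rw [lA2, lB, lT, ← ENNReal.ofReal_mul (by positivity), ← ENNReal.ofReal_mul (by positivity),
      ← ENNReal.ofReal_add (by positivity) (by positivity),
      ← ENNReal.ofReal_add (by positivity) (by positivity),
      ← ENNReal.ofReal_add (by positivity) (by positivity),
      ENNReal.ofReal_eq_ofReal_iff (by positivity) (by positivity)] at main
  have e3 : 1 / lam * (1 / 2 * (lam * μ) ^ 2) = 1 / 2 * lam * μ ^ 2 := by field_simp
  rw [e3] at main
  linear_combination 2 * main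

lemma Sol.mean_lt_one (hT : FT (Iio 0) = 0) (hA : FA (Iio 0) = 0) (hB : FB (Iio 0) = 0)
    (hμ : 0 < μ) (hlam : 0 < lam) {F : Measure ℝ} (hF : Sol FT FA FB μ lam F) :
    ∫ t, t ∂FT < 1 := by
  obtain ⟨-, -, -, -, -, h⟩ := hF.analysis hT hA hB hμ hlam
  have m20 : 0 ≤ ∫ x, x ^ 2 ∂F := integral_nonneg fun x => sq_nonneg x
  have a20 : 0 ≤ ∫ a, a ^ 2 ∂FA := integral_nonneg fun a => sq_nonneg a
  have b0 : 0 ≤ ∫ b, b ∂FB := integral_nonneg_of_ae (ae_nn hB)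
  have : 0 < (lam ^ 2 * (∫ a, a ^ 2 ∂FA) + lam + ∫ b, b ∂FB) * μ ^ 2 := by positivity
  rw [← h] at this
  exact sub_pos.1 (pos_of_mul_pos_right this m20)

end backward

end

/-- Theorem 2: the moment conditions hold iff the power-mixture functional equation has
exactly one solution with mean `μ` and finite second moment; moreover, the solution has
variance `((λ² Var[A] + λ + E[B] + E[T])/(1 − E[T])) μ²`. -/
theorem stmt5 (μ lam : ℝ) (hμ : 0 < μ) (hlam : 0 < lam) (FT FA FB : Measure ℝ)
    [IsProbabilityMeasure FT] [IsProbabilityMeasure FA] [IsProbabilityMeasure FB]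
    (hT : FT (Set.Iio 0) = 0) (hA : FA (Set.Iio 0) = 0) (hB : FB (Set.Iio 0) = 0) :
    (Cond FT FA FB lam ↔ (∃! F : Measure ℝ, Sol FT FA FB μ lam F)) ∧
    (Cond FT FA FB lam → ∀ F : Measure ℝ, Sol FT FA FB μ lam F →
      (∫ x, x ^ 2 ∂F) - (∫ x, x ∂F) ^ 2 =
        (lam ^ 2 * ((∫ a, a ^ 2 ∂FA) - (∫ a, a ∂FA) ^ 2) + lam + (∫ b, b ∂FB) +
            (∫ t, t ∂FT)) / (1 - (∫ t, t ∂FT)) * μ ^ 2) := by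
  refine ⟨⟨fun hc => ?_, fun ⟨F, hF, _⟩ => ?_⟩, fun _ F hF => ?_⟩
  · obtain ⟨c1, c2, c3, c4⟩ := hc
    have iT := integrable_id_of_lintegral hT (c1.trans ENNReal.one_lt_top).ne
    have hT1 : ∫ t, t ∂FT < 1 := by
      rw [integral_id_eq hT, ← ENNReal.toReal_one]
      exact ENNReal.toReal_strict_mono ENNReal.one_ne_top c1
    have iA := integrable_id_of_lintegral hA (by rw [c2]; exact ENNReal.ofReal_ne_top)
    have mA : ∫ a, a ∂FA = 1 / lam := by
      rw [integral_id_eq hA, c2, ENNReal.toReal_ofReal (by positivity)]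
    have iA2 : Integrable (fun a => a ^ 2) FA := by
      refine ⟨(by fun_prop : Measurable fun a : ℝ => a ^ 2).aestronglyMeasurable, ?_⟩
      rwa [hasFiniteIntegral_iff_ofReal (ae_of_all _ fun a => sq_nonneg a)]
    have iB := integrable_id_of_lintegral hB c4.ne
    obtain ⟨F, hF⟩ := Sol.exists hT hA hB hμ hlam iT hT1 iA mA iA2 iB
    exact ⟨F, hF, fun G hG => Sol.unique hT hA hB hμ hlam iT hT1 iA mA hG hF⟩
  · obtain ⟨iA, mA, iA2, iB, iT, -⟩ := hF.analysis hT hA hB hμ hlam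
    have hT1 := hF.mean_lt_one hT hA hB hμ hlam
    refine ⟨?_, ?_, ?_, ?_⟩
    · rw [← ofReal_integral_eq_lintegral_ofReal iT (ae_nn hT)]
      exact ENNReal.ofReal_lt_one.2 hT1
    · rw [← ofReal_integral_eq_lintegral_ofReal iA (ae_nn hA), mA]
    · rw [← ofReal_integral_eq_lintegral_ofReal iA2 (ae_of_all _ fun a => sq_nonneg a)]
      exact ENNReal.ofReal_lt_top
    · rw [← ofReal_integral_eq_lintegral_ofReal iB (ae_nn hB)]
      exact ENNReal.ofReal_lt_top
  · obtain ⟨iA, mA, iA2, iB, iT, h⟩ := hF.analysis hT hA hB hμ hlam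
    have hT1 := hF.mean_lt_one hT hA hB hμ hlam
    have ne : 1 - ∫ t, t ∂FT ≠ 0 := (sub_pos.2 hT1).ne'
    rw [hF.2.2.1, mA, div_mul_eq_mul_div, eq_div_iff ne, sub_mul, h]
    field_simp
    ring
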